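/- arXiv:1404.4786 — 3 statements merged into one kernel-verified Lean document; each statement's English description precedes it below -/
import Mathlib

section
/- Let F be a field such that there exists a ring homomorphism from ℝ to F or from the p-adic numbers ℚ_p to F for some prime p, let n ≥ 2 be an integer, and let w₁ ∈ F_{d₁}, w₂ ∈ F_{d₂} be nontrivial words. Then every element of SL_n(F) that is not in the center Z(SL_n(F)) is a product g₁g₂ with g₁ ∈ w₁(SL_n(F)) and g₂ ∈ w₂(SL_n(F)). -/
/-- The set of `w`-values in the group `G`: the image of the word map `w : G^d → G`. -/
def wordValues {d : ℕ} (w : FreeGroup (Fin d)) (G : Type*) [Group G] : Set G :=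
  Set.range fun g : Fin d → G => FreeGroup.lift g w

open Matrix

section Sourour
variable {F : Type*} [Field F]

def Simi {ι : Type*} [Fintype ι] [DecidableEq ι] (A B : Matrix ι ι F) : Prop :=
  ∃ P Q : Matrix ι ι F, P * Q = 1 ∧ Q * P = 1 ∧ A = P * B * Q

def Fac {ι : Type*} [Fintype ι] [DecidableEq ι] (A : Matrix ι ι F) (β γ : ι → F) : Prop :=
  ∃ B C : Matrix ι ι F, A = B * C ∧ Simi B (diagonal β) ∧ Simi C (diagonal γ)

variable {ι κ : Type*} [Fintype ι] [DecidableEq ι] [Fintype κ] [DecidableEq κ]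

theorem Simi.trans {A B C : Matrix ι ι F} (h : Simi A B) (h' : Simi B C) : Simi A C := by
  obtain ⟨P, Q, h1, h2, rfl⟩ := h
  obtain ⟨P', Q', h1', h2', rfl⟩ := h'
  refine ⟨P * P', Q' * Q, ?_, ?_, by simp only [Matrix.mul_assoc]⟩
  · rw [Matrix.mul_assoc, ← Matrix.mul_assoc P', h1', Matrix.one_mul, h1]
  · rw [Matrix.mul_assoc, ← Matrix.mul_assoc Q, h2, Matrix.one_mul, h2']

theorem Simi.transpose {A B : Matrix ι ι F} (h : Simi A B) : Simi Aᵀ Bᵀ := by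
  obtain ⟨P, Q, h1, h2, rfl⟩ := h
  refine ⟨Qᵀ, Pᵀ, ?_, ?_, ?_⟩
  · rw [← Matrix.transpose_mul, h1, Matrix.transpose_one]
  · rw [← Matrix.transpose_mul, h2, Matrix.transpose_one]
  · simp only [Matrix.transpose_mul, Matrix.mul_assoc]

theorem Simi.det {A B : Matrix ι ι F} (h : Simi A B) : A.det = B.det := by
  obtain ⟨P, Q, h1, h2, rfl⟩ := h
  rw [Matrix.det_mul, Matrix.det_mul, mul_right_comm, ← Matrix.det_mul, h1]; simp

theorem Fac.conj {A A' : Matrix ι ι F} {β γ : ι → F} (h : Simi A A') (h' : Fac A' β γ) :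
    Fac A β γ := by
  obtain ⟨P, Q, h1, h2, rfl⟩ := h
  obtain ⟨B, C, rfl, hB, hC⟩ := h'
  refine ⟨P * B * Q, P * C * Q, ?_, Simi.trans ⟨P, Q, h1, h2, rfl⟩ hB,
    Simi.trans ⟨P, Q, h1, h2, rfl⟩ hC⟩
  calc P * (B * C) * Q = P * B * 1 * C * Q := by simp only [Matrix.mul_assoc, Matrix.one_mul]
    _ = _ := by rw [← h2]; simp only [Matrix.mul_assoc]

theorem Simi.reindex {A B : Matrix ι ι F} (e : κ ≃ ι) (h : Simi A B) :
    Simi (A.submatrix e e) (B.submatrix e e) := by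
  obtain ⟨P, Q, h1, h2, rfl⟩ := h
  refine ⟨P.submatrix e e, Q.submatrix e e, ?_, ?_, ?_⟩
  · rw [Matrix.submatrix_mul_equiv, h1, Matrix.submatrix_one_equiv]
  · rw [Matrix.submatrix_mul_equiv, h2, Matrix.submatrix_one_equiv]
  · rw [Matrix.submatrix_mul_equiv, Matrix.submatrix_mul_equiv]

theorem Fac.reindex {A : Matrix ι ι F} {β γ : ι → F} (e : κ ≃ ι) (h : Fac A β γ) :
    Fac (A.submatrix e e) (β ∘ e) (γ ∘ e) := by
  obtain ⟨B, C, rfl, hB, hC⟩ := h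
  refine ⟨B.submatrix e e, C.submatrix e e, ?_, ?_, ?_⟩
  · rw [Matrix.submatrix_mul_equiv]
  · simpa using hB.reindex e
  · simpa using hC.reindex e

theorem simi_lower {L : Matrix κ κ F} {β : Unit ⊕ κ → F} (hβ : Function.Injective β)
    (h : Simi L (diagonal (β ∘ Sum.inr))) (c : Matrix κ Unit F) :
    Simi (fromBlocks (diagonal (β ∘ Sum.inl)) 0 c L) (diagonal β) := by
  obtain ⟨P, Q, h1, h2, rfl⟩ := h
  have hne : ∀ k, β (Sum.inl ()) - β (Sum.inr k) ≠ 0 := fun k hk => by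
    have := hβ (sub_eq_zero.1 hk); simp at this
  set y : Matrix κ Unit F := Matrix.of fun k _ => (β (Sum.inl ()) - β (Sum.inr k))⁻¹ * (Q * c) k () with hy
  have key : y * diagonal (β ∘ Sum.inl) - diagonal (β ∘ Sum.inr) * y = Q * c := by
    ext k u
    simp only [Matrix.sub_apply, Matrix.mul_diagonal, Matrix.diagonal_mul, Function.comp, hy,
      Matrix.of_apply]
    have := hne k
    field_simp
  have key2 : P * (y * diagonal (β ∘ Sum.inl)) - P * (diagonal (β ∘ Sum.inr) * y) = c := by
    rw [← Matrix.mul_sub, key, ← Matrix.mul_assoc, h1, Matrix.one_mul]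
  have hd : diagonal β = fromBlocks (diagonal (β ∘ Sum.inl)) 0 0 (diagonal (β ∘ Sum.inr)) := by
    rw [Matrix.fromBlocks_diagonal]; congr 1; ext (i | i) <;> rfl
  refine ⟨fromBlocks 1 0 (P * y) P, fromBlocks 1 0 (-y) Q, ?_, ?_, ?_⟩
  · rw [Matrix.fromBlocks_multiply]; simp [h1]
  · rw [Matrix.fromBlocks_multiply]; simp [← Matrix.mul_assoc, h2]
  · rw [hd, Matrix.fromBlocks_multiply, Matrix.fromBlocks_multiply]
    congr 1 <;> simp
    rw [← sub_eq_add_neg]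
    simpa only [Matrix.mul_assoc] using key2.symm

theorem simi_upper {U : Matrix κ κ F} {β : Unit ⊕ κ → F} (hβ : Function.Injective β)
    (h : Simi U (diagonal (β ∘ Sum.inr))) (r : Matrix Unit κ F) :
    Simi (fromBlocks (diagonal (β ∘ Sum.inl)) r 0 U) (diagonal β) := by
  have h' := h.transpose
  rw [Matrix.diagonal_transpose] at h'
  have := (simi_lower hβ h' rᵀ).transpose
  simpa [Matrix.fromBlocks_transpose] using this

theorem fac_block {β γ : Unit ⊕ κ → F} (hβ : Function.Injective β) (hγ : Function.Injective γ)
    (hβ0 : ∀ i, β i ≠ 0) (hγ0 : ∀ i, γ i ≠ 0) (r : Matrix Unit κ F) (c : Matrix κ Unit F)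
    (S : Matrix κ κ F) (δ : F) (hδ : δ = β (Sum.inl ()) * γ (Sum.inl ()))
    (h : Fac S (β ∘ Sum.inr) (γ ∘ Sum.inr)) :
    Fac (fromBlocks (δ • 1) r c (S + δ⁻¹ • (c * r))) β γ := by
  obtain ⟨L, U, rfl, hL, hU⟩ := h
  refine ⟨_, _, ?_, simi_lower hβ hL ((γ (Sum.inl ()))⁻¹ • c),
    simi_upper hγ hU ((β (Sum.inl ()))⁻¹ • r)⟩
  have h1 := hβ0 (Sum.inl ())
  have h2 := hγ0 (Sum.inl ())
  rw [Matrix.fromBlocks_multiply]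
  have d1 : ∀ β : Unit ⊕ κ → F, diagonal (β ∘ Sum.inl) = β (Sum.inl ()) • (1 : Matrix Unit Unit F) := by
    intro β; ext i j; simp
  rw [d1, d1]
  congr 1
  · simp [hδ, smul_smul, mul_comm]
  · simp [smul_smul, h1]
  · simp [smul_smul, h2]
  · simp [hδ, smul_smul, mul_comm, add_comm]

theorem simi_unip (a : Matrix Unit Unit F) (r : Matrix Unit κ F) (c : Matrix κ Unit F)
    (B : Matrix κ κ F) (v : Matrix Unit κ F) :
    Simi (fromBlocks a r c B)
      (fromBlocks (a + v * c) (r + v * B - (a + v * c) * v) c (B - c * v)) := by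
  refine ⟨fromBlocks 1 (-v) 0 1, fromBlocks 1 v 0 1, ?_, ?_, ?_⟩
  · rw [Matrix.fromBlocks_multiply]; simp
  · rw [Matrix.fromBlocks_multiply]; simp
  · rw [Matrix.fromBlocks_multiply, Matrix.fromBlocks_multiply]
    congr 1
    · simp
    · simp [Matrix.add_mul, Matrix.mul_sub, Matrix.mul_assoc]
      abel
    · simp
    · simp

theorem det_blk (δ : F) (hδ : δ ≠ 0) (r : Matrix Unit κ F) (c : Matrix κ Unit F)
    (S : Matrix κ κ F) :
    (fromBlocks (δ • 1) r c (S + δ⁻¹ • (c * r))).det = δ * S.det := by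
  have : fromBlocks (δ • (1 : Matrix Unit Unit F)) r c (S + δ⁻¹ • (c * r)) =
      fromBlocks 1 0 (δ⁻¹ • c) 1 * fromBlocks (δ • 1) r 0 S := by
    rw [Matrix.fromBlocks_multiply]
    congr 1 <;> simp [smul_smul, hδ, add_comm]
  rw [this, Matrix.det_mul, Matrix.det_fromBlocks_zero₁₂, Matrix.det_fromBlocks_zero₂₁]
  simp

/-- normal form with nonscalar Schur complement -/
theorem exists_schur [Nonempty κ] (δ : F) (hδ : δ ≠ 0) (a : Matrix Unit Unit F)
    (r : Matrix Unit κ F)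
    (c : Matrix κ Unit F) (B : Matrix κ κ F) (hc : c ≠ 0) (hdet : (fromBlocks a r c B).det ≠ 0) :
    ∃ (r' : Matrix Unit κ F) (S : Matrix κ κ F),
      (Fintype.card κ = 1 ∨ ∀ μ : F, S ≠ μ • 1) ∧
      Simi (fromBlocks a r c B) (fromBlocks (δ • 1) r' c (S + δ⁻¹ • (c * r'))) := by
  obtain ⟨k, hk⟩ : ∃ k, c k () ≠ 0 := by
    by_contra! h; exact hc (by ext i j; exact h i)
  -- first step
  have st1 : ∃ (r' : Matrix Unit κ F) (S : Matrix κ κ F), 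
      Simi (fromBlocks a r c B) (fromBlocks (δ • 1) r' c (S + δ⁻¹ • (c * r'))) := by
    set v : Matrix Unit κ F := Matrix.of fun _ j => if j = k then (δ - a () ()) / c k () else 0 with hv
    have e : a + v * c = δ • 1 := by
      ext i j; simp [Matrix.mul_apply, hv, hk]
    have := simi_unip a r c B v
    rw [e] at this
    refine ⟨r + v * B - (δ • (1 : Matrix Unit Unit F)) * v, (B - c * v) - δ⁻¹ • (c * (r + v * B - (δ • (1 : Matrix Unit Unit F)) * v)), ?_⟩
    rw [sub_add_cancel]; exact this
  obtain ⟨r1, S1, h1⟩ := st1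
  by_cases hS : Fintype.card κ = 1 ∨ ∀ μ : F, S1 ≠ μ • 1
  · exact ⟨r1, S1, hS, h1⟩
  push Not at hS
  obtain ⟨hcard, μ, rfl⟩ := hS
  have hμ : μ ≠ 0 := by
    rintro rfl
    rw [h1.det, det_blk _ hδ] at hdet
    simp at hdet
  obtain ⟨l, hl⟩ : ∃ l : κ, l ≠ k := by
    have : 1 < Fintype.card κ := lt_of_le_of_ne Fintype.card_pos (Ne.symm hcard)
    have := Fintype.one_lt_card_iff_nontrivial.1 this
    exact exists_ne k
  set v : Matrix Unit κ F := Matrix.of fun _ j => (if j = l then c k () else 0) - (if j = k then c l () else 0) with hv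
  have hvc : v * c = 0 := by
    ext i j; simp [Matrix.mul_apply, hv, sub_mul, Finset.sum_sub_distrib]
    ring
  have := simi_unip (δ • 1) r1 c (μ • 1 + δ⁻¹ • (c * r1)) v
  rw [hvc, add_zero] at this
  set r2 := r1 + v * (μ • 1 + δ⁻¹ • (c * r1)) - (δ • (1 : Matrix Unit Unit F)) * v with hr2
  have hr2' : r2 = r1 + μ • v - δ • v := by
    simp [hr2, Matrix.mul_add, ← Matrix.mul_assoc, hvc]
  refine ⟨r2, μ • 1 - (δ⁻¹ * μ) • (c * v), Or.inr ?_, h1.trans ?_⟩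
  · intro ν hν
    have e1 : (μ • (1 : Matrix κ κ F) - (δ⁻¹ * μ) • (c * v)) * c = μ • c := by
      rw [Matrix.sub_mul, Matrix.smul_mul, Matrix.smul_mul, Matrix.mul_assoc, hvc]; simp
    rw [hν] at e1
    have e2 : ν = μ := by
      have := congrFun (congrFun e1 k) ()
      simpa [hk] using this
    rw [e2] at hν
    have e3 := congrFun (congrFun hν k) l
    simp [hδ, hμ, Matrix.mul_apply, hv, hk, hl, hl.symm] at e3
  · convert this using 2
    rw [hr2']
    simp only [Matrix.mul_add, Matrix.mul_sub, Matrix.mul_smul, smul_add, smul_sub, smul_smul,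
      inv_mul_cancel₀ hδ, one_smul]
    abel

theorem exists_offdiag (A : Matrix ι ι F) (hA : ∀ μ : F, A ≠ μ • 1) :
    ∃ A', Simi A A' ∧ ∃ i j, i ≠ j ∧ A' i j ≠ 0 := by
  by_cases h : ∃ i j, i ≠ j ∧ A i j ≠ 0
  · exact ⟨A, ⟨1, 1, by simp, by simp, by simp⟩, h⟩
  push Not at h
  have hd : A = diagonal (fun i => A i i) := by
    ext i j
    by_cases hij : i = j
    · subst hij; simp
    · rw [h i j hij, Matrix.diagonal_apply_ne _ hij]
  obtain ⟨i, j, hij⟩ : ∃ i j, A i i ≠ A j j := by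
    by_contra! h'
    by_cases hne : Nonempty ι
    · obtain ⟨i⟩ := hne
      apply hA (A i i)
      rw [hd]; ext a b
      simp [Matrix.diagonal_apply, Matrix.one_apply, h' a i]
    · have := not_nonempty_iff.1 hne
      exact hA 0 (Subsingleton.elim _ _)
  have hne : i ≠ j := fun h => hij (by rw [h])
  refine ⟨(1 - single i j 1) * A * (1 + single i j 1), ⟨1 + single i j 1, 1 - single i j 1,
    ?_, ?_, ?_⟩, i, j, hne, ?_⟩
  · simp [Matrix.mul_sub, Matrix.add_mul, Matrix.single_mul_single_of_ne, hne.symm]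
  · simp [Matrix.mul_add, Matrix.sub_mul, Matrix.single_mul_single_of_ne, hne.symm]
  · have e : (1 + single i j (1:F)) * (1 - single i j 1) = 1 := by
      simp [Matrix.mul_sub, Matrix.add_mul, Matrix.single_mul_single_of_ne, hne.symm]
    simp only [Matrix.mul_assoc]
    rw [e, Matrix.mul_one, ← Matrix.mul_assoc, e, Matrix.one_mul]
  · simp only [Matrix.mul_add, Matrix.sub_mul, Matrix.one_mul, Matrix.mul_one, Matrix.add_apply,
      Matrix.sub_apply, Matrix.mul_single_apply_same, Matrix.single_mul_apply_same, h i j hne,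
      h j i hne.symm]
    intro h0
    apply hij
    linear_combination h0

theorem sourour (n : ℕ) : ∀ (A : Matrix (Fin (n+1)) (Fin (n+1)) F) (β γ : Fin (n+1) → F),
    (n = 0 ∨ ∀ μ : F, A ≠ μ • 1) → Function.Injective β → Function.Injective γ →
    (∀ i, β i ≠ 0) → (∀ i, γ i ≠ 0) → A.det = (∏ i, β i) * ∏ i, γ i → Fac A β γ := by
  induction n with
  | zero =>
    intro A β γ _ _ _ _ _ hdet
    refine ⟨diagonal β, diagonal γ, ?_, ⟨1, 1, by simp, by simp, by simp⟩,
      ⟨1, 1, by simp, by simp, by simp⟩⟩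
    ext i j
    have hi : i = 0 := by omega
    have hj : j = 0 := by omega
    subst hi hj
    simpa using hdet
  | succ n ih =>
    intro A β γ hA hβ hγ hβ0 hγ0 hdet
    have hA : ∀ μ : F, A ≠ μ • 1 := hA.resolve_left (by omega)
    obtain ⟨A', hs, i, j, hij, hA'⟩ := exists_offdiag A hA
    refine Fac.conj hs ?_
    rw [hs.det] at hdet
    obtain ⟨e, he⟩ : ∃ e : Unit ⊕ Fin (n+1) ≃ Fin (n+1+1), e (Sum.inl ()) = j := by
      let e0 : Unit ⊕ Fin (n+1) ≃ Fin (n+1+1) := Fintype.equivOfCardEq (by simp [add_comm])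
      exact ⟨e0.trans (Equiv.swap (e0 (Sum.inl ())) j), by simp⟩
    suffices h : Fac (A'.submatrix e e) (β ∘ e) (γ ∘ e) by
      have := h.reindex e.symm
      simpa [Function.comp_assoc] using this
    have hdet' : (A'.submatrix e e).det = (∏ i, (β ∘ e) i) * ∏ i, (γ ∘ e) i := by
      rw [Matrix.det_submatrix_equiv_self, hdet]
      congr 1
      · exact (Equiv.prod_comp e β).symm
      · exact (Equiv.prod_comp e γ).symm
    set M := A'.submatrix e e with hM
    have hc : M.toBlocks₂₁ ≠ 0 := by
      intro h
      obtain ⟨x, hx⟩ := e.surjective i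
      rcases x with x | x
      · exact hij (by rw [← hx, ← he])
      · have := congrFun (congrFun h x) ()
        simp [Matrix.toBlocks₂₁, hM, he, hx] at this
        exact hA' this
    have hβ' := hβ.comp e.injective
    have hγ' := hγ.comp e.injective
    have hβ0' : ∀ i, (β ∘ e) i ≠ 0 := fun i => hβ0 _
    have hγ0' : ∀ i, (γ ∘ e) i ≠ 0 := fun i => hγ0 _
    generalize β ∘ e = β' at *
    generalize γ ∘ e = γ' at *
    have hM0 : M.det ≠ 0 := by
      rw [hdet']
      exact mul_ne_zero (Finset.prod_ne_zero_iff.2 fun i _ => hβ0' i)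
        (Finset.prod_ne_zero_iff.2 fun i _ => hγ0' i)
    rw [← Matrix.fromBlocks_toBlocks M] at hdet' hM0 ⊢
    have hδ : β' (Sum.inl ()) * γ' (Sum.inl ()) ≠ 0 := mul_ne_zero (hβ0' _) (hγ0' _)
    obtain ⟨r', S, hS, hsim⟩ := exists_schur _ hδ _ _ _ _ hc hM0
    refine Fac.conj hsim ?_
    refine fac_block hβ' hγ' hβ0' hγ0' _ _ _ _ rfl ?_
    refine ih _ _ _ (by simpa using hS) (hβ'.comp Sum.inr_injective)
      (hγ'.comp Sum.inr_injective) (fun _ => hβ0' _) (fun _ => hγ0' _) ?_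
    rw [hsim.det, det_blk _ hδ] at hdet'
    simp only [Fintype.prod_sum_type, Finset.univ_unique, Finset.prod_singleton] at hdet'
    apply mul_left_cancel₀ hδ
    rw [hdet']
    simp only [Function.comp]
    ring
end Sourour

theorem wordValues_map {d : ℕ} {w : FreeGroup (Fin d)} {G H : Type*} [Group G] [Group H]
    (φ : G →* H) {x : G} (hx : x ∈ wordValues w G) : φ x ∈ wordValues w H := by
  obtain ⟨g, rfl⟩ := hx
  refine ⟨fun i => φ (g i), ?_⟩
  exact (FreeGroup.lift_unique (φ.comp (FreeGroup.lift g)) (by simp)).symm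

theorem wordValues_prod {d : ℕ} {w : FreeGroup (Fin d)} {G H : Type*} [Group G] [Group H]
    {x : G} {y : H} (hx : x ∈ wordValues w G) (hy : y ∈ wordValues w H) :
    (x, y) ∈ wordValues w (G × H) := by
  obtain ⟨g, rfl⟩ := hx
  obtain ⟨h, rfl⟩ := hy
  refine ⟨fun i => (g i, h i), ?_⟩
  exact (FreeGroup.lift_unique ((FreeGroup.lift g).prod (FreeGroup.lift h)) (by simp)).symm

section SL
variable {F : Type*} [Field F]
variable {ι κ : Type*} [Fintype ι] [DecidableEq ι] [Fintype κ] [DecidableEq κ]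

def conjHom (P Q : Matrix ι ι F) (h1 : P * Q = 1) (h2 : Q * P = 1) :
    SpecialLinearGroup ι F →* SpecialLinearGroup ι F where
  toFun X := ⟨P * X.1 * Q, by
    rw [Matrix.det_mul, Matrix.det_mul, mul_right_comm, ← Matrix.det_mul, h1]; simp⟩
  map_one' := by ext1; simp [h1]
  map_mul' X Y := by
    apply Subtype.ext
    change P * (X.1 * Y.1) * Q = (P * X.1 * Q) * (P * Y.1 * Q)
    calc P * (X.1 * Y.1) * Q = P * X.1 * 1 * Y.1 * Q := by
          simp only [Matrix.mul_assoc, Matrix.one_mul]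
      _ = _ := by rw [← h2]; simp only [Matrix.mul_assoc]

def blockHom : SpecialLinearGroup ι F × SpecialLinearGroup κ F →* SpecialLinearGroup (ι ⊕ κ) F where
  toFun X := ⟨fromBlocks X.1.1 0 0 X.2.1, by
    rw [Matrix.det_fromBlocks_zero₂₁, X.1.2, X.2.2, one_mul]⟩
  map_one' := by apply Subtype.ext; exact Matrix.fromBlocks_one
  map_mul' X Y := by
    apply Subtype.ext
    change fromBlocks (X.1.1 * Y.1.1) 0 0 (X.2.1 * Y.2.1) =
      fromBlocks X.1.1 0 0 X.2.1 * fromBlocks Y.1.1 0 0 Y.2.1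
    rw [Matrix.fromBlocks_multiply]; simp

def reindexHom (e : κ ≃ ι) : SpecialLinearGroup ι F →* SpecialLinearGroup κ F where
  toFun X := ⟨X.1.submatrix e e, by rw [Matrix.det_submatrix_equiv_self, X.2]⟩
  map_one' := by apply Subtype.ext; exact Matrix.submatrix_one_equiv e
  map_mul' X Y := by
    apply Subtype.ext
    exact (Matrix.submatrix_mul_equiv X.1 Y.1 e e e).symm

/-- `w` takes a value on `SL_ι(F)` which is diagonal with distinct entries. -/
def Good {d : ℕ} (w : FreeGroup (Fin d)) (ι : Type*) [Fintype ι] [DecidableEq ι]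
    (F : Type*) [Field F] : Prop :=
  ∃ D : ι → F, Function.Injective D ∧ ∃ h ∈ wordValues w (SpecialLinearGroup ι F),
    h.1 = diagonal D

theorem wv_simi {d : ℕ} {w : FreeGroup (Fin d)} {h : SpecialLinearGroup ι F}
    (hh : h ∈ wordValues w (SpecialLinearGroup ι F)) {B : Matrix ι ι F} (hB : Simi B h.1) :
    ∃ h' ∈ wordValues w (SpecialLinearGroup ι F), h'.1 = B := by
  obtain ⟨P, Q, h1, h2, rfl⟩ := hB
  exact ⟨_, wordValues_map (conjHom P Q h1 h2) hh, rfl⟩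

theorem good_final {d₁ d₂ : ℕ} {w₁ : FreeGroup (Fin d₁)} {w₂ : FreeGroup (Fin d₂)} {n : ℕ}
    (h1 : Good w₁ (Fin (n+1)) F) (h2 : Good w₂ (Fin (n+1)) F)
    (g : SpecialLinearGroup (Fin (n+1)) F)
    (hg : g ∉ Subgroup.center (SpecialLinearGroup (Fin (n+1)) F)) :
    ∃ g₁ ∈ wordValues w₁ (SpecialLinearGroup (Fin (n+1)) F),
        ∃ g₂ ∈ wordValues w₂ (SpecialLinearGroup (Fin (n+1)) F), g = g₁ * g₂ := by
  obtain ⟨β, hβ, b, hb, hbd⟩ := h1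
  obtain ⟨γ, hγ, c, hc, hcd⟩ := h2
  have pβ : ∏ i, β i = 1 := by rw [← Matrix.det_diagonal, ← hbd, b.2]
  have pγ : ∏ i, γ i = 1 := by rw [← Matrix.det_diagonal, ← hcd, c.2]
  have hs : ∀ μ : F, g.1 ≠ μ • 1 := by
    intro μ hμ
    apply hg
    rw [Matrix.SpecialLinearGroup.mem_center_iff]
    refine ⟨μ, ?_, ?_⟩
    · have := g.2
      rw [hμ] at this
      simpa using this
    · rw [hμ]; ext i j; simp [Matrix.scalar_apply, Matrix.diagonal_apply, Matrix.one_apply]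
  obtain ⟨B, C, hBC, hB, hC⟩ := sourour n g.1 β γ (Or.inr hs) hβ hγ
    (fun i hi => by rw [Finset.prod_eq_zero (Finset.mem_univ i) hi] at pβ; simp at pβ)
    (fun i hi => by rw [Finset.prod_eq_zero (Finset.mem_univ i) hi] at pγ; simp at pγ)
    (by rw [pβ, pγ, g.2, one_mul])
  rw [← hbd] at hB
  rw [← hcd] at hC
  obtain ⟨b', hb', rfl⟩ := wv_simi hb hB
  obtain ⟨c', hc', rfl⟩ := wv_simi hc hC
  exact ⟨b', hb', c', hc', Subtype.ext hBC⟩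

theorem good_map {K : Type*} [Field K] (f : K →+* F) {d : ℕ} {w : FreeGroup (Fin d)}
    (h : Good w ι K) : Good w ι F := by
  obtain ⟨D, hD, x, hx, hxD⟩ := h
  refine ⟨f ∘ D, f.injective.comp hD, _, wordValues_map (SpecialLinearGroup.map f) hx, ?_⟩
  change x.1.map f = _
  rw [hxD, Matrix.diagonal_map (map_zero f)]; rfl

theorem good_reindex (e : κ ≃ ι) {d : ℕ} {w : FreeGroup (Fin d)}
    (h : Good w ι F) : Good w κ F := by
  obtain ⟨D, hD, x, hx, hxD⟩ := h
  refine ⟨D ∘ e, hD.comp e.injective, _, wordValues_map (reindexHom e) hx, ?_⟩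
  change x.1.submatrix e e = _
  rw [hxD]; simp

theorem simi_diag2 (M : Matrix (Fin 2) (Fin 2) F) (hM : M.det = 1) (l : F) (hl : l ≠ 0)
    (hll : l ≠ l⁻¹) (ht : M.trace = l + l⁻¹) : Simi (diagonal ![l, l⁻¹]) M := by
  suffices h : ∃ P : Matrix (Fin 2) (Fin 2) F, P.det ≠ 0 ∧ M * P = P * diagonal ![l, l⁻¹] by
    obtain ⟨P, hP, h⟩ := h
    have hu : IsUnit P.det := isUnit_iff_ne_zero.2 hP
    refine ⟨P⁻¹, P, Matrix.nonsing_inv_mul _ hu, Matrix.mul_nonsing_inv _ hu, ?_⟩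
    rw [Matrix.mul_assoc, h, ← Matrix.mul_assoc, Matrix.nonsing_inv_mul _ hu, Matrix.one_mul]
  set m := l⁻¹ with hm
  have hlm : l * m = 1 := mul_inv_cancel₀ hl
  clear_value m
  have hd : m - l ≠ 0 := sub_ne_zero.2 hll.symm
  rw [Matrix.det_fin_two] at hM
  rw [Matrix.trace_fin_two] at ht
  have hD : diagonal ![l, m] = !![l, 0; 0, m] := by
    ext i j; fin_cases i <;> fin_cases j <;> rfl
  rw [hD]
  rw [Matrix.eta_fin_two M]
  generalize M 0 0 = a at *
  generalize M 0 1 = b at *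
  generalize M 1 0 = c at *
  generalize M 1 1 = e at *
  by_cases hb : b = 0
  · by_cases hc : c = 0
    · subst hb hc
      have : (a - l) * (a - m) = 0 := by linear_combination a * ht - hM + hlm
      rcases mul_eq_zero.1 this with h | h
      · refine ⟨1, by simp, ?_⟩
        have h1 : a = l := sub_eq_zero.1 h
        have h2 : e = m := by linear_combination ht - h
        rw [h1, h2]; simp
      · have h1 : a = m := sub_eq_zero.1 h
        have h2 : e = l := by linear_combination ht - h
        refine ⟨!![0, 1; 1, 0], by simp [Matrix.det_fin_two], ?_⟩
        rw [h1, h2]; simp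
    · refine ⟨!![l - e, m - e; c, c], ?_, ?_⟩
      · rw [Matrix.det_fin_two_of]
        intro h
        exact mul_ne_zero hc hd (by linear_combination -h)
      · rw [Matrix.mul_fin_two, Matrix.mul_fin_two]
        have e1 : a * (l - e) + b * c = (l - e) * l + (m - e) * 0 := by
          linear_combination l * ht - hM + hlm
        have e2 : a * (m - e) + b * c = (l - e) * 0 + (m - e) * m := by
          linear_combination m * ht - hM + hlm
        have e3 : c * (l - e) + e * c = c * l + c * 0 := by ring
        have e4 : c * (m - e) + e * c = c * 0 + c * m := by ring
        rw [e1, e2, e3, e4]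
  · refine ⟨!![b, b; l - a, m - a], ?_, ?_⟩
    · rw [Matrix.det_fin_two_of]
      intro h
      exact mul_ne_zero hb hd (by linear_combination h)
    · rw [Matrix.mul_fin_two, Matrix.mul_fin_two]
      have e1 : a * b + b * (l - a) = b * l + b * 0 := by ring
      have e2 : a * b + b * (m - a) = b * 0 + b * m := by ring
      have e3 : c * b + e * (l - a) = (l - a) * l + (m - a) * 0 := by
        linear_combination l * ht - hM + hlm
      have e4 : c * b + e * (m - a) = (l - a) * 0 + (m - a) * m := by
        linear_combination m * ht - hM + hlm
      rw [e1, e2, e3, e4]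
end SL

section Trace
variable {K : Type*} [NontriviallyNormedField K]

def NN (x y : K) : Matrix (Fin 2) (Fin 2) K := !![-y, 1; -(x * y), x]

def EE (x y : K) : Matrix (Fin 2) (Fin 2) K := (x - y)⁻¹ • NN x y

theorem NN_mul (x y z w : K) : NN x y * NN z w = (z - y) • NN x w := by
  ext i j; fin_cases i <;> fin_cases j <;> simp [NN, Matrix.mul_apply, Fin.sum_univ_two] <;> ring

theorem AA_mul (x y s t : K) (hxy : x ≠ y) (hst : s * t = 1) :
    (s • EE x y + t • EE y x) * (s • EE y x + t • EE x y) = 1 := by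
  have h1 : x - y ≠ 0 := sub_ne_zero.2 hxy
  have hj : (y - x)⁻¹ = -(x - y)⁻¹ := by rw [← neg_sub x y, inv_neg]
  have hi : (x - y)⁻¹ * (x - y) = 1 := inv_mul_cancel₀ h1
  simp only [EE, hj]
  generalize (x - y)⁻¹ = u at *
  simp only [Matrix.mul_add, Matrix.add_mul, Matrix.smul_mul, Matrix.mul_smul, NN_mul, smul_smul]
  ext i j
  fin_cases i <;> fin_cases j <;> simp [NN]
  · linear_combination (u * (x - y)) ^ 2 * hst + (u * (x - y) + 1) * hi
  · ring
  · ring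
  · linear_combination (u * (x - y)) ^ 2 * hst + (u * (x - y) + 1) * hi

theorem AA_det (x y s t : K) (hxy : x ≠ y) (hst : s * t = 1) :
    (s • EE x y + t • EE y x).det = 1 := by
  have h1 : x - y ≠ 0 := sub_ne_zero.2 hxy
  have hj : (y - x)⁻¹ = -(x - y)⁻¹ := by rw [← neg_sub x y, inv_neg]
  have hi : (x - y)⁻¹ * (x - y) = 1 := inv_mul_cancel₀ h1
  simp only [EE, hj]
  generalize (x - y)⁻¹ = u at *
  rw [Matrix.det_fin_two]
  simp [NN]
  linear_combination (u * (x - y)) ^ 2 * hst + (u * (x - y) + 1) * hi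

def flp {d : ℕ} (c : Fin d × Bool) : Fin d × Bool := (c.1, !c.2)

theorem list_prod_E {d : ℕ} (a : Fin d × Bool → K) (ha : Function.Injective a)
    (l : List (Fin d × Bool)) : ∀ c, FreeGroup.IsReduced (c :: l) →
    ∃ k : K, k ≠ 0 ∧ ((c :: l).map fun c => EE (a c) (a (flp c))).prod =
      k • NN (a c) (a (flp ((c :: l).getLast (by simp)))) := by
  have hne : ∀ c, a c - a (flp c) ≠ 0 := fun c h => by
    have := ha (sub_eq_zero.1 h)
    have := congrArg Prod.snd this
    simp [flp] at this
  induction l with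
  | nil =>
    intro c _
    exact ⟨(a c - a (flp c))⁻¹, inv_ne_zero (hne c), by simp [EE]⟩
  | cons c' l ih =>
    intro c hc
    have hc' := hc
    rw [FreeGroup.isReduced_cons_cons] at hc
    obtain ⟨k, hk, e⟩ := ih c' hc.2
    refine ⟨(a c - a (flp c))⁻¹ * k * (a c' - a (flp c)), ?_, ?_⟩
    · refine mul_ne_zero (mul_ne_zero (inv_ne_zero (hne c)) hk) fun h => ?_
      have h := ha (sub_eq_zero.1 h)
      have := hc.1 (by rw [h]; rfl)
      rw [h] at this
      simp [flp] at this
    · rw [List.map_cons, List.prod_cons, e, EE, Matrix.smul_mul, Matrix.mul_smul, NN_mul, smul_smul,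
        smul_smul, List.getLast_cons (List.cons_ne_nil c' l)]

open Filter Topology

theorem trace_unbounded {d : ℕ} (w : FreeGroup (Fin d)) (hw : w ≠ 1) (R : ℝ) :
    ∃ h ∈ wordValues w (SpecialLinearGroup (Fin 2) K), R < ‖h.1.trace‖ := by
  obtain ⟨a⟩ : Nonempty (Fin d × Bool ↪ K) := by
    exact ⟨(Fintype.equivFin _).toEmbedding.trans (Fin.valEmbedding.trans (Infinite.natEmbedding K))⟩
  set L := FreeGroup.reduceCyclically w.toWord with hL
  have hLr : FreeGroup.IsCyclicallyReduced L :=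
    FreeGroup.reduceCyclically.isCyclicallyReduced (FreeGroup.isReduced_toWord)
  set C := FreeGroup.mk (FreeGroup.reduceCyclically.conjugator w.toWord) with hC
  have hwL : w = C * FreeGroup.mk L * C⁻¹ := by
    rw [hC, FreeGroup.inv_mk, FreeGroup.mul_mk, FreeGroup.mul_mk, 
      FreeGroup.reduceCyclically.conj_conjugator_reduceCyclically, FreeGroup.mk_toWord]
  have hL0 : L ≠ [] := by
    intro h
    rw [h] at hwL
    apply hw
    rw [hwL, ← FreeGroup.one_eq_mk]; simp
  have hne : ∀ c, a c ≠ a (flp c) := fun c h => by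
    have := congrArg Prod.snd (a.injective h)
    simp [flp] at this
  let T : K → K := fun t =>
    (L.map fun c => EE (a c) (a (flp c)) + t ^ 2 • EE (a (flp c)) (a c)).prod.trace
  have hTc : Continuous T := by
    refine Continuous.matrix_trace ?_
    refine continuous_list_prod _ fun c _ => ?_
    fun_prop
  have hT0 : T 0 ≠ 0 := by
    obtain ⟨c, l, hcl⟩ := List.exists_cons_of_ne_nil hL0
    have h1 := hLr.1
    have h2 := hLr.2
    simp only [T]
    rw [hcl] at h1 h2 ⊢
    obtain ⟨k, hk, e⟩ := list_prod_E a a.injective l c h1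
    simp only [ne_eq, OfNat.ofNat_ne_zero, not_false_eq_true, zero_pow, zero_smul, add_zero]
    rw [e, Matrix.trace_smul, Matrix.trace_fin_two]
    refine mul_ne_zero hk ?_
    simp only [NN]
    intro h0
    have h0 : a c = a (flp ((c :: l).getLast (by simp))) := by
      simp at h0; linear_combination h0
    have h0 := a.injective h0
    have := h2 _ (List.getLast?_eq_getLast_of_ne_nil (by simp)) c (by simp) (congrArg Prod.fst h0).symm
    have h3 := congrArg Prod.snd h0
    rw [← this] at h3
    simp [flp] at h3
  have hlim : Tendsto (fun t : K => ‖t⁻¹‖ ^ L.length * ‖T t‖) (𝓝[≠] 0) atTop := by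
    refine Tendsto.atTop_mul_pos (C := ‖T 0‖) (norm_pos_iff.2 hT0) ?_ ?_
    · exact (tendsto_pow_atTop (by simpa using hL0)).comp 
        (tendsto_norm_cobounded_atTop.comp tendsto_inv₀_nhdsNE_zero)
    · exact (hTc.norm.tendsto 0).mono_left nhdsWithin_le_nhds
  obtain ⟨t, ht, ht0⟩ := ((hlim.eventually_gt_atTop R).and self_mem_nhdsWithin).exists
  have ht0 : t ≠ 0 := ht0
  have hst : t⁻¹ * t = 1 := inv_mul_cancel₀ ht0
  let A : Fin d × Bool → SpecialLinearGroup (Fin 2) K := fun c =>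
    ⟨t⁻¹ • EE (a c) (a (flp c)) + t • EE (a (flp c)) (a c), AA_det _ _ _ _ (hne c) hst⟩
  have hA : ∀ i, A (i, false) = (A (i, true))⁻¹ := by
    intro i
    apply eq_inv_of_mul_eq_one_left
    apply Subtype.ext
    exact AA_mul _ _ _ _ (hne (i, false)) hst
  let g : Fin d → SpecialLinearGroup (Fin 2) K := fun i => A (i, true)
  refine ⟨FreeGroup.lift g w, ⟨g, rfl⟩, ?_⟩
  have e1 : (FreeGroup.lift g w).1.trace = (FreeGroup.lift g (FreeGroup.mk L)).1.trace := by
    rw [hwL]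
    simp only [map_mul, map_inv]
    set X := FreeGroup.lift g C
    set Y := FreeGroup.lift g (FreeGroup.mk L)
    change (X.1 * Y.1 * (X⁻¹).1).trace = _
    rw [Matrix.trace_mul_comm, ← Matrix.mul_assoc]
    change ((X⁻¹ * X).1 * Y.1).trace = _
    simp
  have e2 : (FreeGroup.lift g (FreeGroup.mk L)).1 = t⁻¹ ^ L.length • 
      (L.map fun c => EE (a c) (a (flp c)) + t ^ 2 • EE (a (flp c)) (a c)).prod := by
    rw [FreeGroup.lift_mk]
    have : (L.map fun x => cond x.2 (g x.1) (g x.1)⁻¹) = L.map A := by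
      apply List.map_congr_left
      rintro ⟨i, b⟩ _
      cases b
      · exact (hA i).symm
      · rfl
    rw [this]
    clear_value L
    clear * - hst
    induction L with
    | nil => simp
    | cons c l ih =>
      rw [List.map_cons, List.prod_cons, List.map_cons, List.prod_cons]
      change (A c).1 * ((l.map A).prod).1 = _
      have hAc : (A c).1 = t⁻¹ • (EE (a c) (a (flp c)) + t ^ 2 • EE (a (flp c)) (a c)) := by
        change t⁻¹ • EE (a c) (a (flp c)) + t • EE (a (flp c)) (a c) = _
        rw [smul_add, smul_smul]
        congr 2
        linear_combination -t * hst
      rw [ih, hAc, List.length_cons, pow_succ t⁻¹, Matrix.mul_smul, Matrix.smul_mul, smul_smul]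
  rw [e1, e2, Matrix.trace_smul, smul_eq_mul, norm_mul, norm_pow]
  exact ht

theorem good_SL {d : ℕ} (w : FreeGroup (Fin d)) (hw : w ≠ 1) (R0 : ℝ)
    (hK : ∀ t : K, R0 < ‖t‖ → ∃ l : K, l ≠ 0 ∧ l + l⁻¹ = t) :
    ∀ n : ℕ, Good w (Fin n) K
  | 0 => ⟨fun _ => 0, fun i => i.elim0, 1, ⟨fun _ => 1, by
      exact (FreeGroup.lift_unique (1 : FreeGroup (Fin d) →* _) (by simp)).symm⟩,
      Subsingleton.elim _ _⟩
  | 1 => ⟨fun _ => 1, fun i j _ => Subsingleton.elim _ _, 1, ⟨fun _ => 1, by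
      exact (FreeGroup.lift_unique (1 : FreeGroup (Fin d) →* _) (by simp)).symm⟩, by simp⟩
  | n + 2 => by
    obtain ⟨D, hD, x, hx, hxD⟩ := good_SL w hw R0 hK n
    have hp : ∏ i, D i = 1 := by rw [← Matrix.det_diagonal, ← hxD, x.2]
    have hD0 : ∀ i, D i ≠ 0 := 
      fun i hi => by rw [Finset.prod_eq_zero (Finset.mem_univ i) hi] at hp; simp at hp
    set S : ℝ := 1 + ∑ i, (‖D i‖ + ‖(D i)⁻¹‖) with hS
    have hS1 : 1 ≤ S := by
      have : 0 ≤ ∑ i, (‖D i‖ + ‖(D i)⁻¹‖) := Finset.sum_nonneg fun i _ => by positivity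
      linarith
    have hSi : ∀ i, ‖D i‖ + ‖(D i)⁻¹‖ ≤ S := by
      intro i
      have := Finset.single_le_sum (f := fun i => ‖D i‖ + ‖(D i)⁻¹‖)
        (fun i _ => by positivity) (Finset.mem_univ i)
      linarith
    obtain ⟨h, hh, hR⟩ := trace_unbounded (K := K) w hw (max R0 (2 * S))
    have key : ∃ l : K, l ≠ 0 ∧ l + l⁻¹ = h.1.trace ∧ S < ‖l‖ := by
      obtain ⟨l, hl, hlt⟩ := hK _ (lt_of_le_of_lt (le_max_left _ _) hR)
      have h1 := lt_of_le_of_lt (le_max_right _ _) hR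
      rw [← hlt] at h1
      have h2 := norm_add_le l l⁻¹
      by_cases h3 : S < ‖l‖
      · exact ⟨l, hl, hlt, h3⟩
      · exact ⟨l⁻¹, inv_ne_zero hl, by rw [inv_inv, add_comm, hlt], by linarith⟩
    obtain ⟨l, hl, hlt, hlS⟩ := key
    have hl1 : ‖l⁻¹‖ < 1 := by
      rw [norm_inv]; exact inv_lt_one_of_one_lt₀ (by linarith)
    have hll : l ≠ l⁻¹ := fun h => by
      have := congrArg norm h
      linarith
    obtain ⟨y, hy, hyD⟩ := wv_simi hh (simi_diag2 h.1 h.2 l hl hll hlt.symm)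
    have hn1 : ∀ i, l ≠ D i := fun i h => by
      have := hSi i
      rw [← h] at this
      have := norm_nonneg (l⁻¹)
      linarith
    have hn2 : ∀ i, l⁻¹ ≠ D i := fun i h => by
      have := hSi i
      rw [← h, inv_inv] at this
      have := norm_nonneg (l⁻¹)
      linarith
    refine good_reindex (ι := Fin 2 ⊕ Fin n) (Fintype.equivOfCardEq (by simp [add_comm])) ?_
    refine ⟨Sum.elim ![l, l⁻¹] D, ?_, _, wordValues_map blockHom (wordValues_prod hy hx), ?_⟩
    · refine Function.Injective.sumElim ?_ hD ?_
      · intro i j hij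
        fin_cases i <;> fin_cases j <;> simp_all
      · intro i j
        fin_cases i
        · exact hn1 j
        · exact hn2 j
    · change fromBlocks y.1 0 0 x.1 = _
      rw [hyD, hxD, Matrix.fromBlocks_diagonal]
end Trace

theorem real_quad (t : ℝ) (ht : 2 < ‖t‖) : ∃ l : ℝ, l ≠ 0 ∧ l + l⁻¹ = t := by
  have h : 0 ≤ t ^ 2 - 4 := by
    rw [Real.norm_eq_abs] at ht
    have := sq_abs t
    nlinarith
  have hs := Real.sq_sqrt h
  set s := √(t ^ 2 - 4)
  have h0 : (t + s) / 2 * ((t - s) / 2) = 1 := by linear_combination -hs / 4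
  have hne : (t + s) / 2 ≠ 0 := left_ne_zero_of_mul_eq_one h0
  refine ⟨(t + s) / 2, hne, ?_⟩
  rw [inv_eq_of_mul_eq_one_right h0]; ring

theorem padic_quad {p : ℕ} [Fact p.Prime] (t : ℚ_[p]) (ht : 1 < ‖t‖) :
    ∃ l : ℚ_[p], l ≠ 0 ∧ l + l⁻¹ = t := by
  have ht0 : t ≠ 0 := by rintro rfl; simp at ht; linarith
  have hc1 : ‖(t ^ 2)⁻¹‖ < 1 := by
    rw [norm_inv, norm_pow]
    exact inv_lt_one_of_one_lt₀ (one_lt_pow₀ ht (by norm_num))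
  obtain ⟨c, hc⟩ : ∃ c : ℤ_[p], (c : ℚ_[p]) = (t ^ 2)⁻¹ := ⟨⟨(t ^ 2)⁻¹, hc1.le⟩, rfl⟩
  rw [← hc, ← PadicInt.norm_def] at hc1
  have h21 : (2 : ℤ_[p]) - 1 = 1 := by ring
  obtain ⟨z, hz, hz1, -⟩ := hensels_lemma (p := p) (R := ℤ_[p]) (F := Polynomial.X ^ 2 - Polynomial.X + Polynomial.C c)
    (a := 1) (by
      simpa [h21] using hc1)
  have hz : (z : ℚ_[p]) ^ 2 - z + (t ^ 2)⁻¹ = 0 := by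
    have := congrArg (fun x : ℤ_[p] => (x : ℚ_[p])) hz
    simpa [hc] using this
  have h0 : (t * z) * (t * (1 - z)) = 1 := by
    field_simp at hz
    linear_combination -hz
  refine ⟨t * z, left_ne_zero_of_mul_eq_one h0, ?_⟩
  rw [inv_eq_of_mul_eq_one_right h0]; ring

theorem sl_waring_two_noncentral {F : Type*} [Field F]
    (hF : Nonempty (ℝ →+* F) ∨ ∃ (p : ℕ) (hp : Fact p.Prime), Nonempty (@Padic p hp →+* F))
    (n : ℕ) (hn : 2 ≤ n) {d₁ d₂ : ℕ} (w₁ : FreeGroup (Fin d₁)) (w₂ : FreeGroup (Fin d₂))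
    (hw₁ : w₁ ≠ 1) (hw₂ : w₂ ≠ 1) :
    ∀ g : Matrix.SpecialLinearGroup (Fin n) F,
      g ∉ Subgroup.center (Matrix.SpecialLinearGroup (Fin n) F) →
      ∃ g₁ ∈ wordValues w₁ (Matrix.SpecialLinearGroup (Fin n) F),
        ∃ g₂ ∈ wordValues w₂ (Matrix.SpecialLinearGroup (Fin n) F), g = g₁ * g₂ := by
  have key : ∀ {d : ℕ} (w : FreeGroup (Fin d)), w ≠ 1 → Good w (Fin n) F := by
    intro d w hw
    rcases hF with ⟨⟨f⟩⟩ | ⟨p, hp, ⟨f⟩⟩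
    · exact good_map f (good_SL w hw 2 real_quad n)
    · exact good_map f (good_SL w hw 1 padic_quad n)
  obtain ⟨m, rfl⟩ : ∃ m, n = m + 1 := ⟨n - 1, by omega⟩
  exact good_final (key w₁ hw₁) (key w₂ hw₂)
end

section
/- Let F be a field such that there exists a ring homomorphism from ℝ to F or from the p-adic numbers ℚ_p to F for some prime p, let n ≥ 2 be an integer, and let w₁ ∈ F_{d₁}, w₂ ∈ F_{d₂}, w₃ ∈ F_{d₃} be nontrivial words. Then every element of SL_n(F) is a product g₁g₂g₃ with g₁ ∈ w₁(SL_n(F)), g₂ ∈ w₂(SL_n(F)), and g₃ ∈ w₃(SL_n(F)). -/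
namespace SLW
open Polynomial Matrix

lemma diagz {F : Type*} [Field F] {n : ℕ} (A : Matrix (Fin n) (Fin n) F) (β : Fin n → F)
    (hβ : Function.Injective β) (hA : A.charpoly = ∏ i, (X - C (β i))) :
    ∃ P : (Matrix (Fin n) (Fin n) F)ˣ, A = P * diagonal β * (P⁻¹ : (Matrix (Fin n) (Fin n) F)ˣ) := by
  have h1 : ∀ i, Module.End.HasEigenvalue (toLin' A) (β i) := by
    intro i
    rw [Module.End.hasEigenvalue_iff_isRoot_charpoly, Matrix.charpoly_toLin', hA]
    simp only [IsRoot.def, eval_prod, eval_sub, eval_X, eval_C]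
    exact Finset.prod_eq_zero (Finset.mem_univ i) (sub_self _)
  choose v hv using fun i => (h1 i).exists_hasEigenvector
  have h2 : LinearIndependent F v :=
    Module.End.eigenvectors_linearIndependent' (toLin' A) β hβ v hv
  have h3 : IsUnit (Matrix.of v)ᵀ := by
    rw [← Matrix.linearIndependent_cols_iff_isUnit]
    exact h2
  obtain ⟨P, hP⟩ := h3
  refine ⟨P, ?_⟩
  rw [Units.eq_mul_inv_iff_mul_eq, hP]
  ext i j
  have := congrFun (hv j).apply_eq_smul i
  simp only [toLin'_apply, mulVec, dotProduct, Pi.smul_apply, smul_eq_mul] at this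
  simp [Matrix.mul_apply, this, mul_comm, Matrix.diagonal_apply]

lemma block_fac {F : Type*} [Field F] {n : ℕ} (b c : F) (hb : b ≠ 0) (hc : c ≠ 0)
    (x : Matrix Unit (Fin n) F) (y : Matrix (Fin n) Unit F) (A B' C' : Matrix (Fin n) (Fin n) F)
    (h : A - (b * c)⁻¹ • (y * x) = B' * C') :
    fromBlocks ((b * c) • (1 : Matrix Unit Unit F)) x y A =
      fromBlocks (b • (1 : Matrix Unit Unit F)) 0 (c⁻¹ • y) B' *
      fromBlocks (c • (1 : Matrix Unit Unit F)) (b⁻¹ • x) 0 C' := by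
  rw [fromBlocks_multiply, ← h]
  congr 1
  · simp [smul_smul, mul_comm]
  · simp [smul_smul, hb]
  · simp [smul_smul, hc]
  · simp [smul_smul, mul_comm]

lemma block_char {F : Type*} [Field F] (b : F) :
   (b • (1 : Matrix Unit Unit F)).charpoly = X - C b := by
  simp [Matrix.charpoly, Matrix.charmatrix]

lemma exists_orth {F : Type*} [Field F] {n : ℕ} (y : Matrix (Fin (n+2)) Unit F) :
    ∃ r : Matrix Unit (Fin (n+2)) F, r ≠ 0 ∧ r * y = 0 := by
  by_cases h : y 0 () = 0
  · refine ⟨Matrix.of fun _ j => if j = 0 then 1 else 0, ?_, ?_⟩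
    · intro h; simpa using congrFun (congrFun h ()) 0
    · ext i j; simp [Matrix.mul_apply, h]
  · refine ⟨Matrix.of fun _ j => if j = 0 then y 1 () else if j = 1 then - y 0 () else 0, ?_, ?_⟩
    · intro h'; apply h; simpa using congrFun (congrFun h' ()) 1
    · ext i j
      have : ∀ k : Fin n, k.succ.succ ≠ 1 := fun k => by
        rw [← Fin.succ_zero_eq_one]
        exact fun h => Fin.succ_ne_zero k (Fin.succ_injective _ h)
      simp [Matrix.mul_apply, Fin.sum_univ_succ, this]; ring

def SF (F : Type*) [Field F] (n : ℕ) : Prop :=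
  ∀ (A : Matrix (Fin (n+1)) (Fin (n+1)) F) (β γ : Fin (n+1) → F), (∀ i, β i ≠ 0) →
    (∀ i, γ i ≠ 0) → (n = 0 ∨ ∀ c : F, A ≠ c • 1) → A.det = (∏ i, β i) * (∏ i, γ i) →
    ∃ B C' : Matrix (Fin (n+1)) (Fin (n+1)) F, A = B * C' ∧ B.charpoly = ∏ i, (X - C (β i)) ∧
      C'.charpoly = ∏ i, (X - C (γ i))

lemma step0 {F : Type*} [Field F] {n : ℕ} (ih : SF F n) (β γ : Fin (n+2) → F)
    (hβ : ∀ i, β i ≠ 0) (hγ : ∀ i, γ i ≠ 0) 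
    (x : Matrix Unit (Fin (n+1)) F) (y : Matrix (Fin (n+1)) Unit F) 
    (A : Matrix (Fin (n+1)) (Fin (n+1)) F) 
    (hS : n = 0 ∨ ∀ c : F, A - (β 0 * γ 0)⁻¹ • (y * x) ≠ c • 1)
    (hdet : (fromBlocks ((β 0 * γ 0) • (1 : Matrix Unit Unit F)) x y A).det =
       (∏ i, β i) * (∏ i, γ i)) :
    ∃ B C', fromBlocks ((β 0 * γ 0) • (1 : Matrix Unit Unit F)) x y A = B * C' ∧ 
      B.charpoly = ∏ i, (X - C (β i)) ∧ C'.charpoly = ∏ i, (X - C (γ i)) := by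
  obtain ⟨B', C', h1, h2, h3⟩ := ih (A - (β 0 * γ 0)⁻¹ • (y * x)) (fun i => β i.succ) (fun i => γ i.succ)
    (fun i => hβ _) (fun i => hγ _) hS (by
      rw [block_fac _ _ (hβ 0) (hγ 0) x y A _ 1 (mul_one _).symm, det_mul, det_fromBlocks_zero₁₂,
        det_fromBlocks_zero₂₁, Fin.prod_univ_succ (f := β), Fin.prod_univ_succ (f := γ)] at hdet
      simp only [det_smul, det_one, Fintype.card_unit, pow_one, mul_one] at hdet
      apply mul_left_cancel₀ (mul_ne_zero (hβ 0) (hγ 0))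
      linear_combination hdet)
  refine ⟨_, _, block_fac _ _ (hβ 0) (hγ 0) x y A _ _ h1, ?_, ?_⟩
  · rw [charpoly_fromBlocks_zero₁₂, block_char, h2, Fin.prod_univ_succ (n := n + 1)]
  · rw [charpoly_fromBlocks_zero₂₁, block_char, h3, Fin.prod_univ_succ (n := n + 1)]

lemma step1 {F : Type*} [Field F] {n : ℕ} (ih : SF F n) (β γ : Fin (n+2) → F)
    (hβ : ∀ i, β i ≠ 0) (hγ : ∀ i, γ i ≠ 0) 
    (x : Matrix Unit (Fin (n+1)) F) (y : Matrix (Fin (n+1)) Unit F) (hy : y ≠ 0)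
    (A : Matrix (Fin (n+1)) (Fin (n+1)) F) 
    (hdet : (fromBlocks ((β 0 * γ 0) • (1 : Matrix Unit Unit F)) x y A).det =
       (∏ i, β i) * (∏ i, γ i)) :
    ∃ B C', fromBlocks ((β 0 * γ 0) • (1 : Matrix Unit Unit F)) x y A = B * C' ∧ 
      B.charpoly = ∏ i, (X - C (β i)) ∧ C'.charpoly = ∏ i, (X - C (γ i)) := by
  by_cases hS : n = 0 ∨ ∀ c : F, A - (β 0 * γ 0)⁻¹ • (y * x) ≠ c • 1
  · exact step0 ih β γ hβ hγ x y A hS hdet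
  push Not at hS
  obtain ⟨hn, s, hs⟩ := hS
  obtain ⟨n, rfl⟩ : ∃ m, n = m + 1 := ⟨n - 1, by omega⟩
  obtain ⟨r, hr, hry⟩ := exists_orth y
  set h := β 0 * γ 0 with hh
  have hh0 : h ≠ 0 := mul_ne_zero (hβ 0) (hγ 0)
  have hs0 : s ≠ 0 := by
    rintro rfl
    rw [block_fac _ _ (hβ 0) (hγ 0) x y A 0 1 (by rw [hs]; simp), det_mul, det_fromBlocks_zero₁₂] at hdet
    rw [det_zero, mul_zero, zero_mul] at hdet
    exact mul_ne_zero (Finset.prod_ne_zero_iff.2 fun i _ => hβ i) 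
      (Finset.prod_ne_zero_iff.2 fun i _ => hγ i) hdet.symm
  let Q : (Matrix (Unit ⊕ Fin (n+1+1)) (Unit ⊕ Fin (n+1+1)) F)ˣ :=
    ⟨fromBlocks 1 r 0 1, fromBlocks 1 (-r) 0 1, by simp [fromBlocks_multiply], by simp [fromBlocks_multiply]⟩
  have hA : A = s • 1 + h⁻¹ • (y * x) := by rw [← hs]; abel
  have hQ : (Q : Matrix _ _ F) * fromBlocks (h • (1 : Matrix Unit Unit F)) x y A * (↑(Q⁻¹) : Matrix (Unit ⊕ Fin (n+1+1)) (Unit ⊕ Fin (n+1+1)) F) = 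
      fromBlocks (h • (1 : Matrix Unit Unit F)) (x + r * A - h • r) y (A - y * r) := by
    simp only [Q, Units.inv_mk, fromBlocks_multiply]
    congr 1 <;> simp [Matrix.add_mul, hry] <;> abel
  have hS' : A - y * r - h⁻¹ • (y * (x + r * A - h • r)) = s • 1 - (s * h⁻¹) • (y * r) := by
    have : r * A = s • r := by
      rw [hA, Matrix.mul_add]
      simp [← Matrix.mul_assoc, hry]
    rw [this, hA]
    simp only [Matrix.mul_sub, Matrix.mul_add, smul_sub, smul_add, Matrix.mul_smul, smul_smul,
      inv_mul_cancel₀ hh0, one_smul, mul_comm s]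
    abel
  obtain ⟨B, C', h1, h2, h3⟩ := step0 ih β γ hβ hγ (x + r * A - h • r) y (A - y * r) (by
    right
    intro c hc
    rw [hS'] at hc
    have e1 : (s * h⁻¹) • (y * r) = (s - c) • 1 := by
      rw [sub_smul, ← hc]; abel
    have e2 : (y * r) * (y * r) = 0 := by
      rw [Matrix.mul_assoc, ← Matrix.mul_assoc r, hry]; simp
    have e3 : (s - c) = 0 := by
      have := congrArg (fun M => M * M) e1
      simp only [Matrix.smul_mul, Matrix.mul_smul, e2, smul_smul, Matrix.mul_one, smul_zero] at this
      have := congrFun (congrFun this 0) 0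
      simpa using this.symm
    rw [e3, zero_smul] at e1
    have e4 : y * r = 0 := by
      simpa [hs0, hh0] using e1
    obtain ⟨i, hi⟩ : ∃ i, y i () ≠ 0 := by
      by_contra! hc
      apply hy; ext i j; exact hc i
    apply hr
    ext u j
    have := congrFun (congrFun e4 i) j
    simp [Matrix.mul_apply] at this
    exact this.resolve_left hi) (by
      rw [← hh, ← hQ, det_units_conj, hdet])
  refine ⟨(↑(Q⁻¹) : Matrix (Unit ⊕ Fin (n+1+1)) (Unit ⊕ Fin (n+1+1)) F) * B * Q, 
    (↑(Q⁻¹) : Matrix (Unit ⊕ Fin (n+1+1)) (Unit ⊕ Fin (n+1+1)) F) * C' * Q, ?_, ?_, ?_⟩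
  · rw [← hh, ← hQ] at h1
    calc _ = (↑(Q⁻¹) : Matrix (Unit ⊕ Fin (n+1+1)) (Unit ⊕ Fin (n+1+1)) F) * (B * C') * (Q : Matrix _ _ F) := by
          rw [← h1]; simp [mul_assoc, -coe_units_inv]
      _ = _ := by simp [mul_assoc, -coe_units_inv]
  · rw [coe_units_inv, charpoly_units_conj', h2]
  · rw [coe_units_inv, charpoly_units_conj', h3]

lemma ext_basis {F : Type*} [Field F] {n : ℕ} (f : Fin 2 → (Fin (n+2) → F))
    (hf : LinearIndependent F f) : ∃ b : Module.Basis (Unit ⊕ Fin (n+1)) F (Fin (n+2) → F), ∃ k,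
      b (Sum.inl ()) = f 0 ∧ b (Sum.inr k) = f 1 := by
  let b0 := Module.Basis.sumExtend hf
  have : Fintype (Fin 2 ⊕ ↑(Module.Basis.sumExtendIndex hf)) := FiniteDimensional.fintypeBasisIndex b0
  have hcard : Fintype.card (Fin 2 ⊕ ↑(Module.Basis.sumExtendIndex hf)) = Fintype.card (Unit ⊕ Fin (n+1)) := by
    rw [← Module.finrank_eq_card_basis b0]
    simp; omega
  classical
  let e0 := Fintype.equivOfCardEq hcard
  let e := e0.trans (Equiv.swap (e0 (Sum.inl 0)) (Sum.inl ()))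
  have he : e (Sum.inl 0) = Sum.inl () := by simp [e]
  let b := b0.reindex e
  have hb0 : b (Sum.inl ()) = f 0 := by
    rw [← he]; simp [b, b0, Module.Basis.sumExtend]; rfl
  have hb1 : b (e (Sum.inl 1)) = f 1 := by
    simp [b, b0, Module.Basis.sumExtend]; rfl
  have hne : e (Sum.inl 1) ≠ Sum.inl () := by
    rw [← he]; simp
  obtain ⟨k, hk⟩ : ∃ k, e (Sum.inl 1) = Sum.inr k := by
    cases hx : e (Sum.inl 1) with
    | inl u => exact absurd hx hne
    | inr k => exact ⟨k, rfl⟩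
  exact ⟨b, k, hb0, hk ▸ hb1⟩

lemma good_basis {F : Type*} [Field F] {n : ℕ} (A : Matrix (Fin (n+2)) (Fin (n+2)) F) (hA : ∀ c : F, A ≠ c • 1)
    (h : F) : ∃ b : Module.Basis (Unit ⊕ Fin (n+1)) F (Fin (n+2) → F), ∃ x y A', y ≠ 0 ∧ 
      LinearMap.toMatrix b b (toLin' A) = fromBlocks (h • (1 : Matrix Unit Unit F)) x y A' := by
  have h1 : ∃ v : Fin (n+2) → F, LinearIndependent F ![v, toLin' A v] := by
    by_contra! hc
    obtain ⟨a, ha⟩ := LinearMap.exists_eq_smul_id_of_forall_notLinearIndependent hc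
    apply hA a
    have := congrArg LinearMap.toMatrix' ha
    simpa using this
  obtain ⟨v, hv⟩ := h1
  have hv2 : LinearIndependent F (![v, toLin' A v - h • v] : Fin 2 → _) := by
    rw [LinearIndependent.pair_iff] at hv ⊢
    intro s t hst
    obtain ⟨e1, e2⟩ := hv (s - t * h) t (by rw [← hst]; module)
    subst e2
    simpa using e1
  obtain ⟨b, k, hb0, hb1⟩ := ext_basis _ hv2
  simp only [Matrix.cons_val_zero, Matrix.cons_val_one] at hb0 hb1
  have hcol : toLin' A (b (Sum.inl ())) = b (Sum.inr k) + h • b (Sum.inl ()) := by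
    rw [hb0, hb1]; abel
  refine ⟨b, (LinearMap.toMatrix b b (toLin' A)).toBlocks₁₂, (LinearMap.toMatrix b b (toLin' A)).toBlocks₂₁,
    (LinearMap.toMatrix b b (toLin' A)).toBlocks₂₂, ?_, ?_⟩
  · intro hc
    have := congrFun (congrFun hc k) ()
    simp only [toBlocks₂₁, of_apply, LinearMap.toMatrix_apply, hcol] at this
    simp at this
  · conv_lhs => rw [← fromBlocks_toBlocks (LinearMap.toMatrix b b (toLin' A))]
    congr 1
    ext i j
    simp only [toBlocks₁₁, of_apply, LinearMap.toMatrix_apply, hcol]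
    simp

lemma sourour {F : Type*} [Field F] (n : ℕ) : SF F n := by
  induction n with
  | zero =>
    intro A β γ hβ hγ _ hdet
    refine ⟨β 0 • 1, γ 0 • 1, ?_, ?_, ?_⟩
    · ext i j
      fin_cases i; fin_cases j
      simpa [mul_comm] using hdet
    · simp [Matrix.charpoly, Matrix.charmatrix]
    · simp [Matrix.charpoly, Matrix.charmatrix]
  | succ n ih =>
    intro A β γ hβ hγ hA hdet
    obtain ⟨b, x, y, A', hy, hM⟩ := good_basis A (hA.resolve_left (by omega)) (β 0 * γ 0)
    obtain ⟨B, C', h1, h2, h3⟩ := step1 ih β γ hβ hγ x y hy A' (by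
      rw [← hM, LinearMap.det_toMatrix, LinearMap.det_toLin', hdet])
    refine ⟨LinearMap.toMatrix' (toLin b b B), LinearMap.toMatrix' (toLin b b C'), ?_, ?_, ?_⟩
    · rw [← LinearMap.toMatrix'_comp, ← toLin_mul, ← h1, ← hM]
      simp
    · rw [← h2]
      rw [← Matrix.charpoly_toLin', toLin'_toMatrix', ← LinearMap.charpoly_toMatrix (toLin b b B) b, LinearMap.toMatrix_toLin]
    · rw [← h3]
      rw [← Matrix.charpoly_toLin', toLin'_toMatrix', ← LinearMap.charpoly_toMatrix (toLin b b C') b, LinearMap.toMatrix_toLin]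

def flp {d : ℕ} (a : Fin d × Bool) : Fin d × Bool := (a.1, !a.2)

lemma flp_ne {d : ℕ} (a : Fin d × Bool) : flp a ≠ a := by
  rcases a with ⟨i, b⟩; simp [flp]

lemma ne_flp {d : ℕ} (a b : Fin d × Bool) (h : a.1 = b.1 → a.2 = b.2) : b ≠ flp a := by
  rcases a with ⟨i, u⟩; rcases b with ⟨j, v⟩
  rintro h'
  simp [flp] at h' h
  have := h h'.1.symm
  rw [this] at h'
  simp at h'

section
variable {K : Type*} [Field K] {d : ℕ} (c : Fin d × Bool → K)

def vv (a : Fin d × Bool) : Fin 2 → K := ![1, c a]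
def ph (a : Fin d × Bool) : Fin 2 → K := ![-c (flp a), 1]
def EE (a : Fin d × Bool) : Matrix (Fin 2) (Fin 2) K :=
  (c a - c (flp a))⁻¹ • vecMulVec (vv c a) (ph c a)
def AA (t : K) (a : Fin d × Bool) : Matrix (Fin 2) (Fin 2) K := t • EE c a + t⁻¹ • EE c (flp a)
def ZZ (s : K) (a : Fin d × Bool) : Matrix (Fin 2) (Fin 2) K := EE c a + s • EE c (flp a)

lemma flp_flp (a : Fin d × Bool) : flp (flp a) = a := by simp [flp]

lemma ph_vv (a b : Fin d × Bool) : ph c a ⬝ᵥ vv c b = c b - c (flp a) := by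
  simp [ph, vv]; ring

lemma AA_det (hc : Function.Injective c) (t : K) (ht : t ≠ 0) (a) : (AA c t a).det = 1 := by
  have h : c a - c (flp a) ≠ 0 := sub_ne_zero.2 fun h => flp_ne a (hc h).symm
  have h' : c (flp a) - c a ≠ 0 := sub_ne_zero.2 fun h => flp_ne a (hc h)
  simp [AA, EE, vv, ph, flp_flp, det_fin_two, vecMulVec]
  field_simp
  ring

lemma AA_adj (hc : Function.Injective c) (t : K) (ht : t ≠ 0) (a) :
    (AA c t a).adjugate = AA c t (flp a) := by
  have h : c a - c (flp a) ≠ 0 := sub_ne_zero.2 fun h => flp_ne a (hc h).symm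
  have h' : c (flp a) - c a ≠ 0 := sub_ne_zero.2 fun h => flp_ne a (hc h)
  ext i j
  fin_cases i <;> fin_cases j <;> 
    simp [AA, EE, vv, ph, flp_flp, adjugate_fin_two, vecMulVec] <;>
  field_simp <;> ring

lemma AA_ZZ (t : K) (ht : t ≠ 0) (a) : AA c t a = t • ZZ c (t⁻¹ ^ 2) a := by
  simp [AA, ZZ, smul_smul]
  congr 1
  field_simp

lemma prod_EE (hc : Function.Injective c) (L : List (Fin d × Bool)) : ∀ a, FreeGroup.IsReduced (a :: L) → 
    ∃ κ : K, κ ≠ 0 ∧ ((a :: L).map (EE c)).prod = κ • vecMulVec (vv c a) (ph c ((a :: L).getLast (by simp))) := by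
  induction L with
  | nil =>
    intro a _
    refine ⟨(c a - c (flp a))⁻¹, inv_ne_zero (sub_ne_zero.2 fun h => flp_ne a (hc h).symm), ?_⟩
    simp [EE]
  | cons b L ih =>
    intro a hL
    rw [FreeGroup.IsReduced, List.isChain_cons_cons] at hL
    obtain ⟨κ, hκ, h⟩ := ih b hL.2
    refine ⟨(c a - c (flp a))⁻¹ * κ * (c b - c (flp a)), ?_, ?_⟩
    · refine mul_ne_zero (mul_ne_zero (inv_ne_zero (sub_ne_zero.2 fun h => flp_ne a (hc h).symm)) hκ) ?_
      exact sub_ne_zero.2 fun h => ne_flp a b hL.1 (hc h)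
    · rw [List.map_cons, List.prod_cons, h, List.getLast_cons (a := a) (by simp), EE, smul_mul_smul_comm,
        vecMulVec_mul_vecMulVec, ph_vv, vecMulVec_smul, smul_smul]

lemma trace_EE (hc : Function.Injective c) (L : List (Fin d × Bool)) (hL : FreeGroup.IsCyclicallyReduced L)
    (hne : L ≠ []) : (L.map (EE c)).prod.trace ≠ 0 := by
  cases L with
  | nil => exact absurd rfl hne
  | cons a L =>
    obtain ⟨κ, hκ, h⟩ := prod_EE c hc L a hL.1
    rw [h, trace_smul, trace_vecMulVec, dotProduct_comm, ph_vv]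
    refine mul_ne_zero hκ (sub_ne_zero.2 fun h => ne_flp _ a ?_ (hc h))
    exact hL.2 _ (List.getLast_mem_getLast? _) _ (by simp)

def gg (hc : Function.Injective c) (t : K) (ht : t ≠ 0) (i : Fin d) : Matrix.SpecialLinearGroup (Fin 2) K :=
  ⟨AA c t (i, true), AA_det c hc t ht _⟩

lemma lift_gg (hc : Function.Injective c) (t : K) (ht : t ≠ 0) (L : List (Fin d × Bool)) :
    ((FreeGroup.lift (gg c hc t ht) (FreeGroup.mk L) : Matrix.SpecialLinearGroup (Fin 2) K) : Matrix (Fin 2) (Fin 2) K) = 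
      t ^ L.length • (L.map (ZZ c (t⁻¹ ^ 2))).prod := by
  rw [FreeGroup.lift_mk]
  induction L with
  | nil => simp
  | cons a L ih =>
    rw [List.map_cons, List.prod_cons, List.map_cons, List.prod_cons, List.length_cons, pow_succ',
      ← smul_mul_smul_comm, ← ih, ← AA_ZZ c t ht]
    refine (Matrix.SpecialLinearGroup.coe_mul _ _).trans ?_
    congr 1
    rcases a with ⟨i, _ | _⟩
    · simp only [cond_false, Matrix.SpecialLinearGroup.coe_inv]
      exact AA_adj c hc t ht _
    · rfl
end

lemma cyc_conj {d : ℕ} (w : FreeGroup (Fin d)) (hw : w ≠ 1) : ∃ (L : List (Fin d × Bool)) (u : FreeGroup (Fin d)),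
    FreeGroup.IsCyclicallyReduced L ∧ L ≠ [] ∧ w = u * FreeGroup.mk L * u⁻¹ := by
  have h := congrArg FreeGroup.mk (FreeGroup.reduceCyclically.conj_conjugator_reduceCyclically w.toWord)
  rw [← FreeGroup.mul_mk, ← FreeGroup.mul_mk, ← FreeGroup.inv_mk, FreeGroup.mk_toWord] at h
  refine ⟨_, _, FreeGroup.reduceCyclically.isCyclicallyReduced FreeGroup.isReduced_toWord, ?_, h.symm⟩
  intro h'
  rw [h', ← FreeGroup.one_eq_mk] at h
  apply hw
  rw [← h, mul_one, mul_inv_cancel]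

lemma trace_conj_sl {K : Type*} [Field K] (a b : Matrix.SpecialLinearGroup (Fin 2) K) :
    ((a * b * a⁻¹ : Matrix.SpecialLinearGroup (Fin 2) K) : Matrix (Fin 2) (Fin 2) K).trace =
      (b : Matrix (Fin 2) (Fin 2) K).trace := by
  rw [Matrix.SpecialLinearGroup.coe_mul, trace_mul_comm, ← Matrix.SpecialLinearGroup.coe_mul,
    show a⁻¹ * (a * b) = b from inv_mul_cancel_left a b]

lemma trace_unbounded {K : Type*} [NontriviallyNormedField K] [CharZero K] {d : ℕ} (w : FreeGroup (Fin d)) 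
    (hw : w ≠ 1) (R : ℝ) : ∃ g ∈ wordValues w (Matrix.SpecialLinearGroup (Fin 2) K), R < ‖(g : Matrix (Fin 2) (Fin 2) K).trace‖ := by
  obtain ⟨L, u, hL, hne, rfl⟩ := cyc_conj w hw
  obtain ⟨c, hc⟩ : ∃ c : Fin d × Bool → K, Function.Injective c :=
    ⟨fun a => (Encodable.encode a : K), fun a b h => Encodable.encode_injective (Nat.cast_injective h)⟩
  have hcont : Continuous fun s : K => (L.map (ZZ c s)).prod.trace := by
    apply Continuous.matrix_trace
    apply continuous_list_prod
    intro a _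
    unfold ZZ
    fun_prop
  set f := fun s : K => (L.map (ZZ c s)).prod.trace with hf
  have hf0 : f 0 ≠ 0 := by
    have : ZZ c 0 = EE c := by ext1 a; simp [ZZ]
    simp only [hf, this]
    exact trace_EE c hc L hL hne
  have h1 : Filter.Tendsto (fun t : K => t⁻¹ ^ 2) (Bornology.cobounded K) (nhds 0) := by
    have := (Filter.tendsto_inv₀_cobounded (α := K)).pow 2
    simpa using this
  have h2 : Filter.Tendsto (fun t : K => ‖f (t⁻¹ ^ 2)‖) (Bornology.cobounded K) (nhds ‖f 0‖) :=
    ((hcont.tendsto 0).comp h1).norm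
  have h3 := h2.eventually (lt_mem_nhds (half_lt_self (norm_pos_iff.2 hf0)))
  have h4 := (tendsto_norm_cobounded_atTop (E := K)).eventually_gt_atTop (max 1 (R / (‖f 0‖ / 2)))
  obtain ⟨t, ht1, ht2⟩ := (h3.and h4).exists
  have ht3 : 1 < ‖t‖ := (le_max_left _ _).trans_lt ht2
  have ht4 : R / (‖f 0‖ / 2) < ‖t‖ := (le_max_right _ _).trans_lt ht2
  have ht0 : t ≠ 0 := by rintro rfl; simp at ht3; linarith
  refine ⟨_, ⟨gg c hc t ht0, rfl⟩, ?_⟩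
  have e : (FreeGroup.lift (gg c hc t ht0) (u * FreeGroup.mk L * u⁻¹) : Matrix (Fin 2) (Fin 2) K).trace = t ^ L.length * f (t⁻¹ ^ 2) := by
    rw [map_mul, map_mul, map_inv]
    refine (trace_conj_sl _ _).trans ?_
    rw [lift_gg, trace_smul, smul_eq_mul]
  have hpos : 0 < ‖f 0‖ / 2 := half_pos (norm_pos_iff.2 hf0)
  simp only [e, norm_mul, norm_pow]
  rw [div_lt_iff₀ hpos] at ht4
  refine ht4.trans_le (mul_le_mul ?_ ht1.le hpos.le (by positivity))
  exact le_self_pow₀ ht3.le (by simpa using hne)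

lemma split_real (t : ℝ) (ht : 2 < ‖t‖) : ∃ l : ℝ, l ^ 2 - t * l + 1 = 0 := by
  have h : 0 ≤ t ^ 2 - 4 := by
    rw [Real.norm_eq_abs] at ht
    nlinarith [sq_abs t]
  refine ⟨(t + √(t ^ 2 - 4)) / 2, ?_⟩
  nlinarith [Real.sq_sqrt h]

lemma split_padic (p : ℕ) [Fact p.Prime] (t : ℚ_[p]) (ht : 2 < ‖t‖) : ∃ l : ℚ_[p], l ^ 2 - t * l + 1 = 0 := by
  have ht0 : t ≠ 0 := by rintro rfl; simp at ht; linarith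
  have h1 : ‖(t⁻¹ ^ 2 : ℚ_[p])‖ < 1 := by
    rw [norm_pow, norm_inv]
    apply pow_lt_one₀ (by positivity) _ (by norm_num)
    exact inv_lt_one_of_one_lt₀ (by linarith)
  let a : ℤ_[p] := ⟨t⁻¹ ^ 2, h1.le⟩
  have ha : ‖a‖ < 1 := h1
  obtain ⟨z, hz, _⟩ := hensels_lemma (F := (X ^ 2 - X + C a : ℤ_[p][X])) (a := 1) (by
    simp
    exact ha)
  refine ⟨t * z, ?_⟩
  have : ((z ^ 2 - z + a : ℤ_[p]) : ℚ_[p]) = 0 := by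
    simp at hz
    rw [hz]; simp
  push_cast at this
  have ha : (a : ℚ_[p]) = t⁻¹ ^ 2 := rfl
  rw [ha] at this
  field_simp at this
  linear_combination this

lemma wv_map {d : ℕ} (w : FreeGroup (Fin d)) {G H : Type*} [Group G] [Group H] (f : G →* H) {g : G}
    (hg : g ∈ wordValues w G) : f g ∈ wordValues w H := by
  obtain ⟨a, rfl⟩ := hg
  refine ⟨fun i => f (a i), ?_⟩
  exact (FreeGroup.lift_unique (f.comp (FreeGroup.lift a)) (by simp)).symm

lemma wv_prod {d : ℕ} (w : FreeGroup (Fin d)) {G H : Type*} [Group G] [Group H] {g : G} {h : H}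
    (hg : g ∈ wordValues w G) (hh : h ∈ wordValues w H) : (g, h) ∈ wordValues w (G × H) := by
  obtain ⟨a, rfl⟩ := hg
  obtain ⟨b, rfl⟩ := hh
  refine ⟨fun i => (a i, b i), ?_⟩
  exact (FreeGroup.lift_unique ((FreeGroup.lift a).prod (FreeGroup.lift b)) (by simp)).symm

lemma wv_one {d : ℕ} (w : FreeGroup (Fin d)) {G : Type*} [Group G] : (1 : G) ∈ wordValues w G :=
  ⟨fun _ => 1, (FreeGroup.lift_unique (1 : FreeGroup (Fin d) →* G) (by simp)).symm⟩

def conjHom {F : Type*} [Field F] {n : ℕ} (P : (Matrix (Fin n) (Fin n) F)ˣ) :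
    Matrix.SpecialLinearGroup (Fin n) F →* Matrix.SpecialLinearGroup (Fin n) F where
  toFun g := ⟨(P : Matrix (Fin n) (Fin n) F) * (g : Matrix (Fin n) (Fin n) F) * (↑(P⁻¹) : Matrix (Fin n) (Fin n) F), by
    rw [det_units_conj, g.det_coe]⟩
  map_one' := by
    apply Subtype.ext
    simp [-coe_units_inv]
  map_mul' g h := by
    apply Subtype.ext
    refine Eq.trans ?_ (Matrix.SpecialLinearGroup.coe_mul _ _).symm
    change (P : Matrix (Fin n) (Fin n) F) * ((g : Matrix (Fin n) (Fin n) F) * (h : Matrix (Fin n) (Fin n) F)) * (↑(P⁻¹) : Matrix (Fin n) (Fin n) F) =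
      ((P : Matrix (Fin n) (Fin n) F) * (g : Matrix (Fin n) (Fin n) F) * (↑(P⁻¹) : Matrix (Fin n) (Fin n) F)) *
      ((P : Matrix (Fin n) (Fin n) F) * (h : Matrix (Fin n) (Fin n) F) * (↑(P⁻¹) : Matrix (Fin n) (Fin n) F))
    simp [-coe_units_inv, mul_assoc]

def blkHom {F : Type*} [Field F] {n : ℕ} (e : Fin 2 ⊕ Fin n ≃ Fin (n + 2)) :
    Matrix.SpecialLinearGroup (Fin 2) F × Matrix.SpecialLinearGroup (Fin n) F →* Matrix.SpecialLinearGroup (Fin (n + 2)) F where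
  toFun g := ⟨reindex e e (fromBlocks (g.1 : Matrix (Fin 2) (Fin 2) F) 0 0 (g.2 : Matrix (Fin n) (Fin n) F)), by
    rw [det_reindex_self, det_fromBlocks_zero₁₂, g.1.det_coe, g.2.det_coe, one_mul]⟩
  map_one' := by
    apply Subtype.ext
    simp
  map_mul' g h := by
    apply Subtype.ext
    refine Eq.trans ?_ (Matrix.SpecialLinearGroup.coe_mul _ _).symm
    change reindex e e (fromBlocks ((g.1 : Matrix (Fin 2) (Fin 2) F) * (h.1 : Matrix (Fin 2) (Fin 2) F)) 0 0
        ((g.2 : Matrix (Fin n) (Fin n) F) * (h.2 : Matrix (Fin n) (Fin n) F))) =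
      reindex e e (fromBlocks (g.1 : Matrix (Fin 2) (Fin 2) F) 0 0 (g.2 : Matrix (Fin n) (Fin n) F)) *
      reindex e e (fromBlocks (h.1 : Matrix (Fin 2) (Fin 2) F) 0 0 (h.2 : Matrix (Fin n) (Fin n) F))
    simp [submatrix_mul_equiv, fromBlocks_multiply]

lemma wv_of_charpoly {F : Type*} [Field F] {n d : ℕ} (w : FreeGroup (Fin d)) (β : Fin n → F)
    (hβ : Function.Injective β) (g : Matrix.SpecialLinearGroup (Fin n) F) 
    (hg : g ∈ wordValues w (Matrix.SpecialLinearGroup (Fin n) F))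
    (hgc : (g : Matrix (Fin n) (Fin n) F).charpoly = ∏ i, (X - C (β i)))
    (B : Matrix (Fin n) (Fin n) F) (hB : B.charpoly = ∏ i, (X - C (β i))) :
    ∃ b ∈ wordValues w (Matrix.SpecialLinearGroup (Fin n) F), (b : Matrix (Fin n) (Fin n) F) = B := by
  obtain ⟨P, hP⟩ := diagz _ β hβ hgc
  obtain ⟨Q, hQ⟩ := diagz _ β hβ hB
  refine ⟨conjHom (Q * P⁻¹) g, wv_map w _ hg, ?_⟩
  change (↑(Q * P⁻¹) : Matrix (Fin n) (Fin n) F) * (g : Matrix (Fin n) (Fin n) F) * (↑((Q * P⁻¹)⁻¹) : Matrix (Fin n) (Fin n) F) = B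
  rw [hP, hQ]
  simp [-coe_units_inv, mul_assoc]

def HasBig (F : Type*) [Field F] {d : ℕ} (w : FreeGroup (Fin d)) : Prop :=
  ∀ Z : Finset F, ∃ g ∈ wordValues w (Matrix.SpecialLinearGroup (Fin 2) F), ∃ l m : F, l ≠ m ∧ l ∉ Z ∧ m ∉ Z ∧
    (g : Matrix (Fin 2) (Fin 2) F).charpoly = (X - C l) * (X - C m)

lemma hasBig {K F : Type*} [NontriviallyNormedField K] [CharZero K] [Field F] (φ : K →+* F)
    (hs : ∀ t : K, 2 < ‖t‖ → ∃ l : K, l ^ 2 - t * l + 1 = 0) {d : ℕ} (w : FreeGroup (Fin d)) (hw : w ≠ 1) :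
    HasBig F w := by
  intro Z
  classical
  let Y : Finset K := (Z.preimage φ φ.injective.injOn) ∪ {1, -1}
  obtain ⟨g, hg, ht⟩ := trace_unbounded (K := K) w hw (2 + ∑ z ∈ Y, ‖z + z⁻¹‖)
  have hnn : 0 ≤ ∑ z ∈ Y, ‖z + z⁻¹‖ := Finset.sum_nonneg fun _ _ => norm_nonneg _
  set t := (g : Matrix (Fin 2) (Fin 2) K).trace with htdef
  obtain ⟨l, hl⟩ := hs t (by linarith)
  have hl0 : l ≠ 0 := by rintro rfl; simp at hl
  have hlt : t = l + l⁻¹ := by field_simp; linear_combination -hl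
  have key : ∀ z ∈ Y, z + z⁻¹ ≠ t := by
    intro z hz h
    have := Finset.single_le_sum (f := fun z => ‖z + z⁻¹‖) (fun _ _ => norm_nonneg _) hz
    simp only [h] at this
    linarith
  have h1 : l ∉ Y := fun h => key l h hlt.symm
  have h2 : l⁻¹ ∉ Y := fun h => key _ h (by rw [hlt, inv_inv, add_comm])
  simp only [Y, Finset.mem_union, Finset.mem_preimage, Finset.mem_insert, Finset.mem_singleton, not_or] at h1 h2
  refine ⟨Matrix.SpecialLinearGroup.map φ g, wv_map w _ hg, φ l, φ l⁻¹, ?_, h1.1, h2.1, ?_⟩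
  · intro h
    have := φ.injective h
    rw [← mul_eq_one_iff_eq_inv₀ hl0, ← sq, sq_eq_one_iff] at this
    exact this.elim h1.2.1 h1.2.2
  · have : ((Matrix.SpecialLinearGroup.map φ g : Matrix.SpecialLinearGroup (Fin 2) F) : Matrix (Fin 2) (Fin 2) F) = 
        (g : Matrix (Fin 2) (Fin 2) K).map φ := rfl
    rw [this, charpoly_map, charpoly_fin_two, g.det_coe, ← htdef, hlt]
    have hm : (C (φ l) * C (φ l⁻¹) : F[X]) = 1 := by
      rw [← C_mul, ← map_mul, mul_inv_cancel₀ hl0]; simp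
    simp only [Polynomial.map_add, Polynomial.map_sub, Polynomial.map_mul, Polynomial.map_pow, map_X, map_C, map_add, map_one, Polynomial.map_one]
    linear_combination -hm

lemma regular {F : Type*} [Field F] {d : ℕ} (w : FreeGroup (Fin d)) (hw : HasBig F w) (n : ℕ) : 
    ∀ Z : Finset F, 1 ∉ Z → ∃ g ∈ wordValues w (Matrix.SpecialLinearGroup (Fin n) F), ∃ β : Fin n → F, 
      Function.Injective β ∧ (∀ i, β i ∉ Z) ∧ 
      (g : Matrix (Fin n) (Fin n) F).charpoly = ∏ i, (X - C (β i)) := by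
  classical
  induction n using Nat.twoStepInduction with
  | zero =>
    intro Z _
    exact ⟨1, wv_one w, fun _ => 1, fun i => i.elim0, fun i => i.elim0, by simp⟩
  | one =>
    intro Z hZ
    exact ⟨1, wv_one w, fun _ => 1, Function.injective_of_subsingleton _, fun i => hZ, by
      simp [Matrix.charpoly_one]⟩
  | more n ih _ =>
    intro Z hZ
    obtain ⟨g, hg, l, m, hlm, hl, hm, hc⟩ := hw (Z ∪ {1})
    simp only [Finset.mem_union, Finset.mem_singleton, not_or] at hl hm
    obtain ⟨h, hh, β, hβ, hβZ, hhc⟩ := ih (Z ∪ {l, m}) (by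
      simp [hZ, Ne.symm hl.2, Ne.symm hm.2])
    simp only [Finset.mem_union, Finset.mem_insert, Finset.mem_singleton, not_or] at hβZ
    let e : Fin 2 ⊕ Fin n ≃ Fin (n + 2) := finSumFinEquiv.trans (finCongr (add_comm _ _))
    refine ⟨blkHom e (g, h), wv_map w _ (wv_prod w hg hh), Fin.cons l (Fin.cons m β), ?_, ?_, ?_⟩
    · rw [Fin.cons_injective_iff, Fin.cons_injective_iff]
      refine ⟨?_, ?_, hβ⟩
      · rintro ⟨i, hi⟩
        refine Fin.cases ?_ ?_ i (motive := fun i => (Fin.cons m β : Fin (n+1) → F) i = l → False) hi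
        · intro h; exact hlm (by simpa using h.symm)
        · intro j h; exact (hβZ j).2.1 (by simpa using h)
      · rintro ⟨i, hi⟩
        exact (hβZ i).2.2 hi
    · intro i
      refine Fin.cases ?_ (fun j => Fin.cases ?_ (fun k => ?_) j) i
      · simpa using hl.1
      · simpa using hm.1
      · simpa using (hβZ k).1
    · change (reindex e e (fromBlocks (g : Matrix (Fin 2) (Fin 2) F) 0 0 (h : Matrix (Fin n) (Fin n) F))).charpoly = _
      rw [charpoly_reindex, charpoly_fromBlocks_zero₁₂, hc, hhc]
      simp [Fin.prod_univ_succ (n := n+1), Fin.prod_univ_succ (n := n), mul_assoc]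

lemma det_of_charpoly {F : Type*} [Field F] {n : ℕ} (A : Matrix (Fin n) (Fin n) F) (hA : A.det = 1) (β : Fin n → F)
    (hβ : Function.Injective β) (h : A.charpoly = ∏ i, (X - C (β i))) : ∏ i, β i = 1 := by
  obtain ⟨P, hP⟩ := diagz A β hβ h
  rw [hP, det_units_conj, det_diagonal] at hA
  exact hA

lemma not_scalar {F : Type*} [Field F] {n : ℕ} (hn : 2 ≤ n) (A : Matrix (Fin n) (Fin n) F) (β : Fin n → F)
    (hβ : Function.Injective β) (h : A.charpoly = ∏ i, (X - C (β i))) (c : F) : A ≠ c • 1 := by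
  intro hc
  obtain ⟨P, hP⟩ := diagz A β hβ h
  have h1 : diagonal β = (c • 1 : Matrix (Fin n) (Fin n) F) := by
    calc diagonal β = (↑(P⁻¹) : Matrix (Fin n) (Fin n) F) * A * P := by
          rw [hP]; simp [-coe_units_inv, mul_assoc]
      _ = _ := by rw [hc]; simp [-coe_units_inv]
  have h2 : ∀ i, β i = c := fun i => by simpa using congrFun (congrFun h1 i) i
  have := hβ ((h2 ⟨0, by omega⟩).trans (h2 ⟨1, by omega⟩).symm)
  simp at this

lemma two_words {F : Type*} [Field F] {n : ℕ} (hn : 2 ≤ n) {d₁ d₂ : ℕ} (w₁ : FreeGroup (Fin d₁))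
    (w₂ : FreeGroup (Fin d₂)) (h₁ : HasBig F w₁) (h₂ : HasBig F w₂) (g : Matrix.SpecialLinearGroup (Fin n) F)
    (hg : ∀ c : F, (g : Matrix (Fin n) (Fin n) F) ≠ c • 1) :
    ∃ g₁ ∈ wordValues w₁ (Matrix.SpecialLinearGroup (Fin n) F),
      ∃ g₂ ∈ wordValues w₂ (Matrix.SpecialLinearGroup (Fin n) F), g = g₁ * g₂ := by
  obtain ⟨a, ha, β, hβ, -, hac⟩ := regular w₁ h₁ n ∅ (by simp)
  obtain ⟨b, hb, γ, hγ, -, hbc⟩ := regular w₂ h₂ n ∅ (by simp)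
  have pβ := det_of_charpoly _ a.det_coe β hβ hac
  have pγ := det_of_charpoly _ b.det_coe γ hγ hbc
  obtain ⟨n, rfl⟩ : ∃ m, n = m + 1 := ⟨n - 1, by omega⟩
  obtain ⟨B, D, h1, h2, h3⟩ := sourour n (g : Matrix _ _ F) β γ
    (fun i => Finset.prod_ne_zero_iff.1 (pβ ▸ one_ne_zero) i (Finset.mem_univ i))
    (fun i => Finset.prod_ne_zero_iff.1 (pγ ▸ one_ne_zero) i (Finset.mem_univ i)) (Or.inr hg)
    (by rw [pβ, pγ, g.det_coe, one_mul])
  obtain ⟨g₁, hg₁, rfl⟩ := wv_of_charpoly w₁ β hβ a ha hac B h2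
  obtain ⟨g₂, hg₂, rfl⟩ := wv_of_charpoly w₂ γ hγ b hb hbc D h3
  exact ⟨g₁, hg₁, g₂, hg₂, Subtype.ext h1⟩

lemma three_words {F : Type*} [Field F] {n : ℕ} (hn : 2 ≤ n) {d₁ d₂ d₃ : ℕ} (w₁ : FreeGroup (Fin d₁))
    (w₂ : FreeGroup (Fin d₂)) (w₃ : FreeGroup (Fin d₃)) (h₁ : HasBig F w₁) (h₂ : HasBig F w₂) (h₃ : HasBig F w₃)
    (g : Matrix.SpecialLinearGroup (Fin n) F) :
    ∃ g₁ ∈ wordValues w₁ (Matrix.SpecialLinearGroup (Fin n) F),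
      ∃ g₂ ∈ wordValues w₂ (Matrix.SpecialLinearGroup (Fin n) F),
        ∃ g₃ ∈ wordValues w₃ (Matrix.SpecialLinearGroup (Fin n) F), g = g₁ * g₂ * g₃ := by
  by_cases hg : ∀ c : F, (g : Matrix (Fin n) (Fin n) F) ≠ c • 1
  · obtain ⟨g₁, hg₁, g₂, hg₂, rfl⟩ := two_words hn w₁ w₂ h₁ h₂ g hg
    exact ⟨g₁, hg₁, g₂, hg₂, 1, wv_one w₃, (mul_one _).symm⟩
  · push Not at hg
    obtain ⟨c, hc⟩ := hg
    obtain ⟨a, ha, β, hβ, -, hac⟩ := regular w₃ h₃ n ∅ (by simp)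
    have hns := not_scalar hn _ β hβ hac
    obtain ⟨g₁, hg₁, g₂, hg₂, h⟩ := two_words hn w₁ w₂ h₁ h₂ (g * a⁻¹) (by
      intro s hs
      have h1 : (g : Matrix (Fin n) (Fin n) F) = s • (a : Matrix (Fin n) (Fin n) F) := by
        calc (g : Matrix (Fin n) (Fin n) F) = ((g * a⁻¹ * a : Matrix.SpecialLinearGroup (Fin n) F) : Matrix (Fin n) (Fin n) F) := by
              rw [inv_mul_cancel_right]
          _ = s • (a : Matrix (Fin n) (Fin n) F) := by
              rw [Matrix.SpecialLinearGroup.coe_mul, hs, smul_mul_assoc, one_mul]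
      have hs0 : s ≠ 0 := by
        rintro rfl
        have hd := g.det_coe
        have : Nonempty (Fin n) := ⟨⟨0, by omega⟩⟩
        rw [h1, zero_smul, det_zero] at hd
        exact zero_ne_one hd
      apply hns (s⁻¹ * c)
      rw [mul_smul, ← hc, h1, smul_smul, inv_mul_cancel₀ hs0, one_smul])
    exact ⟨g₁, hg₁, g₂, hg₂, a, ha, by rw [← h, inv_mul_cancel_right]⟩

end SLW

/-- If `F` admits a ring homomorphism from `ℝ` or from some `ℚ_p`, `n ≥ 2`, and `w₁, w₂, w₃` are
nontrivial words, then `SL_n(F) = w₁(SL_n(F)) · w₂(SL_n(F)) · w₃(SL_n(F))`. -/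
theorem sl_waring_three {F : Type*} [Field F]
    (hF : Nonempty (ℝ →+* F) ∨ ∃ (p : ℕ) (hp : Fact p.Prime), Nonempty (@Padic p hp →+* F))
    (n : ℕ) (hn : 2 ≤ n) {d₁ d₂ d₃ : ℕ}
    (w₁ : FreeGroup (Fin d₁)) (w₂ : FreeGroup (Fin d₂)) (w₃ : FreeGroup (Fin d₃))
    (hw₁ : w₁ ≠ 1) (hw₂ : w₂ ≠ 1) (hw₃ : w₃ ≠ 1) :
    ∀ g : Matrix.SpecialLinearGroup (Fin n) F,
      ∃ g₁ ∈ wordValues w₁ (Matrix.SpecialLinearGroup (Fin n) F),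
        ∃ g₂ ∈ wordValues w₂ (Matrix.SpecialLinearGroup (Fin n) F),
          ∃ g₃ ∈ wordValues w₃ (Matrix.SpecialLinearGroup (Fin n) F), g = g₁ * g₂ * g₃ := by
  have hb : ∀ {d : ℕ} (w : FreeGroup (Fin d)), w ≠ 1 → SLW.HasBig F w := by
    intro d w hw
    rcases hF with ⟨⟨φ⟩⟩ | ⟨p, hp, ⟨φ⟩⟩
    · exact SLW.hasBig φ SLW.split_real w hw
    · exact SLW.hasBig φ (SLW.split_padic p) w hw
  exact fun g => SLW.three_words hn w₁ w₂ w₃ (hb w₁ hw₁) (hb w₂ hw₂) (hb w₃ hw₃) g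
end

section
/- Let F be a field such that there exists a ring homomorphism from ℝ to F or from the p-adic numbers ℚ_p to F for some prime p, let n ≥ 2 be an integer, and let w₁ ∈ F_{d₁}, w₂ ∈ F_{d₂} be nontrivial words. Then every element of the quotient group PSL_n(F) := SL_n(F)/Z(SL_n(F)) is a product g₁g₂ with g₁ ∈ w₁(PSL_n(F)) and g₂ ∈ w₂(PSL_n(F)). -/
/-- `PSL_n(F) = SL_n(F) / Z(SL_n(F))`. -/
abbrev PSL (n : ℕ) (F : Type*) [Field F] :=
  Matrix.SpecialLinearGroup (Fin n) F ⧸ Subgroup.center (Matrix.SpecialLinearGroup (Fin n) F)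

section PWsec
open Polynomial

namespace PW

def bar {d : ℕ} (l : Fin d × Bool) : Fin d × Bool := (l.1, !l.2)

def cc (K : Type*) [Field K] {d : ℕ} (l : Fin d × Bool) : K :=
  ((2 * (l.1 : ℕ) + (if l.2 then 1 else 0) : ℕ) : K)

lemma cc_inj (K : Type*) [Field K] [CharZero K] {d : ℕ} {l m : Fin d × Bool}
    (h : cc K l = cc K m) : l = m := by
  obtain ⟨i, e⟩ := l
  obtain ⟨j, f⟩ := m
  unfold cc at h
  rw [Nat.cast_inj] at h
  cases e <;> cases f <;> simp [Fin.ext_iff] at h ⊢ <;> omega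

def dd (K : Type*) [Field K] {d : ℕ} (l : Fin d × Bool) : K := (cc K (bar l) - cc K l)⁻¹

lemma bar_ne {d : ℕ} (l : Fin d × Bool) : bar l ≠ l := by
  intro h
  have := congrArg Prod.snd h
  simp [bar] at this

lemma cc_sub_ne (K : Type*) [Field K] [CharZero K] {d : ℕ} (l : Fin d × Bool) :
    cc K (bar l) - cc K l ≠ 0 := by
  intro h
  exact bar_ne l (cc_inj K (sub_eq_zero.mp h))

def PP (K : Type*) [Field K] {d : ℕ} (l : Fin d × Bool) : Matrix (Fin 2) (Fin 2) K :=
  dd K l • Matrix.vecMulVec ![1, cc K l] ![cc K (bar l), -1]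

def JJ (K : Type*) [Field K] {d : ℕ} (l : Fin d × Bool) : Matrix (Fin 2) (Fin 2) K :=
  dd K l • !![cc K (bar l) + cc K l, -2; cc K l ^ 2 + cc K (bar l) ^ 2, -(cc K (bar l) + cc K l)]

noncomputable def MM (K : Type*) [Field K] {d : ℕ} (l : Fin d × Bool) : Matrix (Fin 2) (Fin 2) K[X] :=
  Matrix.of fun i j => X * C (PP K l i j) + C (JJ K l i j)

lemma MM_det (K : Type*) [Field K] [CharZero K] {d : ℕ} (l : Fin d × Bool) : (MM K l).det = 1 := by
  have h := cc_sub_ne K l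
  have h2 : (C (dd K l)) * (C (cc K (bar l)) - C (cc K l)) = 1 := by
    rw [← C_sub, ← C_mul, dd, inv_mul_cancel₀ h, C_1]
  rw [Matrix.det_fin_two]
  simp [MM, PP, JJ, Matrix.vecMulVec]
  generalize C (cc K (bar l)) = b at *
  generalize C (cc K l) = a at *
  generalize C (dd K l) = e at *
  have : (C 2 : K[X]) = 2 := rfl
  rw [this]
  linear_combination (e * (b-a) + 1) * h2

lemma bar_bar {d : ℕ} (l : Fin d × Bool) : bar (bar l) = l := by simp [bar]

lemma dd_bar (K : Type*) [Field K] {d : ℕ} (l : Fin d × Bool) : dd K (bar l) = - dd K l := by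
  rw [dd, dd, bar_bar, ← neg_sub, inv_neg]

lemma MM_bar (K : Type*) [Field K] [CharZero K] {d : ℕ} (l : Fin d × Bool) :
    MM K (bar l) = (MM K l).adjugate := by
  rw [Matrix.adjugate_fin_two]
  ext i j : 1
  fin_cases i <;> fin_cases j <;> simp [MM, PP, JJ, dd_bar, bar_bar, Matrix.vecMulVec] <;> ring

noncomputable def GG (K : Type*) [Field K] [CharZero K] {d : ℕ} (i : Fin d) :
    Matrix.SpecialLinearGroup (Fin 2) K[X] := ⟨MM K (i, true), MM_det K _⟩

lemma lift_GG (K : Type*) [Field K] [CharZero K] {d : ℕ} (L : List (Fin d × Bool)) :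
    (FreeGroup.lift (GG K) (FreeGroup.mk L) : Matrix.SpecialLinearGroup (Fin 2) K[X]).1
      = (L.map (MM K)).prod := by
  rw [FreeGroup.lift_mk]
  induction L with
  | nil => simp
  | cons l L ih =>
    simp only [List.map_cons, List.prod_cons]
    change _ * _ = _
    rw [ih]
    congr 1
    obtain ⟨i, e⟩ := l
    cases e
    · simp only [cond_false]
      exact (MM_bar K (i, true)).symm
    · rfl

lemma matPoly_MM (K : Type*) [Field K] {d : ℕ} (l : Fin d × Bool) :
    (matPolyEquiv (MM K l)).natDegree ≤ 1 ∧ (matPolyEquiv (MM K l)).coeff 1 = PP K l := by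
  constructor
  · rw [natDegree_le_iff_coeff_eq_zero]
    intro k hk
    ext i j
    rw [matPolyEquiv_coeff_apply]
    obtain ⟨k, rfl⟩ : ∃ m, k = m + 2 := ⟨k - 2, by omega⟩
    simp [MM]
  · ext i j
    rw [matPolyEquiv_coeff_apply]
    simp [MM, coeff_C]

lemma dd_ne (K : Type*) [Field K] [CharZero K] {d : ℕ} (l : Fin d × Bool) : dd K l ≠ 0 :=
  inv_ne_zero (cc_sub_ne K l)

lemma pair_ne (K : Type*) [Field K] [CharZero K] {d : ℕ} {l m : Fin d × Bool}
    (h : l.1 = m.1 → l.2 = m.2) : cc K (bar l) - cc K m ≠ 0 := by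
  intro h'
  have := cc_inj K (sub_eq_zero.mp h')
  obtain ⟨i, e⟩ := l
  obtain ⟨j, f⟩ := m
  simp [bar] at this h
  obtain ⟨rfl, rfl⟩ := this
  simp at h

lemma prod_PP (K : Type*) [Field K] [CharZero K] {d : ℕ} (L : List (Fin d × Bool)) :
    ∀ l, FreeGroup.IsReduced (l :: L) → ∃ k : K, k ≠ 0 ∧
    ((l :: L).map (PP K)).prod =
      k • Matrix.vecMulVec ![1, cc K l] ![cc K (bar ((l :: L).getLast (by simp))), -1] := by
  induction L with
  | nil => intro l _; exact ⟨dd K l, dd_ne K l, by simp [PP]⟩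
  | cons m L ih =>
    intro l hl
    rw [FreeGroup.isReduced_cons_cons] at hl
    obtain ⟨k, hk, hp⟩ := ih m hl.2
    refine ⟨dd K l * k * (cc K (bar l) - cc K m),
      mul_ne_zero (mul_ne_zero (dd_ne K l) hk) (pair_ne K hl.1), ?_⟩
    rw [List.map_cons, List.prod_cons, hp, PP, List.getLast_cons_cons]
    generalize (m :: L).getLast _ = z
    ext i j
    fin_cases i <;> fin_cases j <;> simp [Matrix.vecMulVec, Matrix.mul_apply, Fin.sum_univ_two] <;> ring

lemma exists_cyc {d : ℕ} (w : FreeGroup (Fin d)) (hw : w ≠ 1) :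
    ∃ (u : FreeGroup (Fin d)) (L : List (Fin d × Bool)), L ≠ [] ∧ FreeGroup.IsCyclicallyReduced L ∧
      w = u * FreeGroup.mk L * u⁻¹ := by
  refine ⟨FreeGroup.mk (FreeGroup.reduceCyclically.conjugator w.toWord),
    FreeGroup.reduceCyclically w.toWord, ?_, ?_, ?_⟩
  rotate_left
  · exact FreeGroup.reduceCyclically.isCyclicallyReduced FreeGroup.isReduced_toWord
  · rw [FreeGroup.inv_mk, FreeGroup.mul_mk, FreeGroup.mul_mk,
      FreeGroup.reduceCyclically.conj_conjugator_reduceCyclically, FreeGroup.mk_toWord]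
  · intro h
    apply hw
    have := FreeGroup.reduceCyclically.conj_conjugator_reduceCyclically w.toWord
    rw [h] at this
    rw [← FreeGroup.mk_toWord (x := w), ← this, List.append_nil, ← FreeGroup.mul_mk, ← FreeGroup.inv_mk,
      mul_inv_cancel]

lemma sl2_poly (K : Type*) [Field K] [CharZero K] {d : ℕ} (w : FreeGroup (Fin d)) (hw : w ≠ 1) :
    ∃ g : Fin d → Matrix.SpecialLinearGroup (Fin 2) K[X],
      0 < (FreeGroup.lift g w).1.trace.degree := by
  refine ⟨GG K, ?_⟩
  obtain ⟨u, L, hL, hc, rfl⟩ := exists_cyc w hw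
  have h1 : (FreeGroup.lift (GG K) (u * FreeGroup.mk L * u⁻¹)).1.trace =
      (L.map (MM K)).prod.trace := by
    rw [map_mul, map_mul, ← lift_GG]
    rw [Matrix.SpecialLinearGroup.coe_mul, Matrix.trace_mul_comm, ← Matrix.SpecialLinearGroup.coe_mul]
    congr 2
    rw [map_inv, inv_mul_cancel_left]
  rw [h1]
  have h2 := coeff_list_prod_of_natDegree_le (L.map (fun l => matPolyEquiv (MM K l))) 1
    (by
      intro p hp
      obtain ⟨l, _, rfl⟩ := List.mem_map.mp hp
      exact (matPoly_MM K l).1)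
  have h3 : (L.map (fun l => matPolyEquiv (MM K l))).prod = matPolyEquiv (L.map (MM K)).prod := by
    rw [map_list_prod, List.map_map]; rfl
  have h4 : (L.map (fun l => matPolyEquiv (MM K l))).map (fun p => p.coeff 1) = L.map (PP K) := by
    rw [List.map_map]
    apply List.map_congr_left
    intro l _
    exact (matPoly_MM K l).2
  rw [h3, h4, List.length_map, mul_one] at h2
  have h5 : (L.map (MM K)).prod.trace.coeff L.length = (L.map (PP K)).prod.trace := by
    rw [← h2]
    simp [Matrix.trace, Fin.sum_univ_two, matPolyEquiv_coeff_apply]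
  have h6 : (L.map (PP K)).prod.trace ≠ 0 := by
    obtain ⟨l, L, rfl⟩ := List.exists_cons_of_ne_nil hL
    obtain ⟨k, hk, hp⟩ := prod_PP K L l hc.1
    have h7 := hc.2 ((l :: L).getLast (by simp)) (by rw [List.getLast?_eq_getLast_of_ne_nil (by simp)]; simp) l (by simp)
    rw [hp]
    have := mul_ne_zero hk (pair_ne K h7)
    convert this using 1
    simp [Matrix.trace, Fin.sum_univ_two, Matrix.vecMulVec]
    ring
  rw [← h5] at h6
  have h8 := le_degree_of_ne_zero h6
  refine lt_of_lt_of_le ?_ h8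
  exact_mod_cast List.length_pos_iff.mpr hL

end PW

namespace PW
open Matrix

section sour
variable {F : Type*} [Field F] {m : Type*} [Fintype m] [DecidableEq m]

lemma exists_equiv_map {V : Type*} [AddCommGroup V] [Module F V] (u v : V)
    (hu : u ≠ 0) (hv : v ≠ 0) : ∃ g : V ≃ₗ[F] V, g u = v := by
  obtain ⟨g, hg⟩ := Submodule.exists_linearEquiv_restrict_eq
    ((LinearEquiv.toSpanNonzeroSingleton F V u hu).symm ≪≫ₗ
      LinearEquiv.toSpanNonzeroSingleton F V v hv)
  refine ⟨g, ?_⟩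
  have := hg ⟨u, Submodule.mem_span_singleton_self u⟩
  rw [← this]
  have h1 : (LinearEquiv.toSpanNonzeroSingleton F V u hu).symm
      ⟨u, Submodule.mem_span_singleton_self u⟩ = 1 := by
    rw [LinearEquiv.symm_apply_eq]
    simp [LinearEquiv.toSpanNonzeroSingleton_apply]
  simp [h1, LinearEquiv.toSpanNonzeroSingleton_apply]

lemma unit_mat (M : Matrix Unit Unit F) : M = (M () ()) • (1 : Matrix Unit Unit F) := by
  ext i j; simp

lemma cp_conj (P : (Matrix m m F)ˣ) (N : Matrix m m F) :
    (P⁻¹.1 * N * P.1).charpoly = N.charpoly := by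
  rw [mul_assoc, charpoly_mul_comm, mul_assoc]; simp

lemma conj1 (A : Matrix (Unit ⊕ m) (Unit ⊕ m) F) (hA : ∀ a : F, A ≠ a • 1) :
    ∃ (P : (Matrix (Unit ⊕ m) (Unit ⊕ m) F)ˣ) (a : F) (y : Matrix Unit m F) (x : Matrix m Unit F)
      (D : Matrix m m F), P * A * P⁻¹.1 = fromBlocks (a • 1) y x D ∧ x ≠ 0 := by
  have h1 : ∃ v, LinearIndependent F ![v, toLin' A v] := by
    by_contra! h
    obtain ⟨a, ha⟩ := LinearMap.exists_eq_smul_id_of_forall_notLinearIndependent h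
    apply hA a
    apply toLin'.injective
    rw [ha]
    simp; rfl
  obtain ⟨v, hv⟩ := h1
  have hv0 : v ≠ 0 := by simpa using hv.ne_zero 0
  obtain ⟨g, hg⟩ := exists_equiv_map (F := F) (Pi.single (Sum.inl ()) 1 : Unit ⊕ m → F) v
    (by intro h; simpa using congrFun h (Sum.inl ())) hv0
  let P : (Matrix (Unit ⊕ m) (Unit ⊕ m) F)ˣ :=
    ⟨LinearMap.toMatrix' g.symm.toLinearMap, LinearMap.toMatrix' g.toLinearMap,
      by rw [← LinearMap.toMatrix'_comp]; simp, by rw [← LinearMap.toMatrix'_comp]; simp⟩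
  refine ⟨P, (P.1 * A * P⁻¹.1) (.inl ()) (.inl ()), toBlocks₁₂ (P.1 * A * P⁻¹.1), toBlocks₂₁ (P.1 * A * P⁻¹.1),
    toBlocks₂₂ (P.1 * A * P⁻¹.1), ?_, ?_⟩
  · conv_lhs => rw [← fromBlocks_toBlocks (P.1 * A * P⁻¹.1)]
    congr 1
    ext i j; simp [toBlocks₁₁]
  · intro hx
    have h2 : ∀ w, (P⁻¹.1) *ᵥ w = g w := fun w => by
      change (LinearMap.toMatrix' g.toLinearMap) *ᵥ w = g w
      rw [← toLin'_apply, toLin'_toMatrix']; rfl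
    have h3 : ∀ w, P.1 *ᵥ w = g.symm w := fun w => by
      change (LinearMap.toMatrix' g.symm.toLinearMap) *ᵥ w = g.symm w
      rw [← toLin'_apply, toLin'_toMatrix']; rfl
    set c := (P.1 * A * P⁻¹.1) (.inl ()) (.inl ()) with hc
    have h4 : (P.1 * A * P⁻¹.1) *ᵥ (Pi.single (Sum.inl ()) 1) = c • Pi.single (Sum.inl ()) 1 := by
      ext i
      rw [mulVec_single_one]
      rcases i with i | i
      · simp [hc, Matrix.col]
      · have := congrFun (congrFun hx i) ()
        simpa [toBlocks₂₁, Matrix.col] using this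
    rw [← mulVec_mulVec, ← mulVec_mulVec, h2, hg, h3, LinearEquiv.symm_apply_eq, map_smul, hg] at h4
    have h5 := LinearIndependent.pair_iff.mp hv c (-1) (by rw [toLin'_apply, h4]; simp)
    simpa using h5.2

def Uz (z : Matrix Unit m F) : (Matrix (Unit ⊕ m) (Unit ⊕ m) F)ˣ :=
  ⟨fromBlocks 1 (-z) 0 1, fromBlocks 1 z 0 1, by simp [fromBlocks_multiply],
    by simp [fromBlocks_multiply]⟩

lemma conjU (z : Matrix Unit m F) (a : Matrix Unit Unit F) (y : Matrix Unit m F) (x : Matrix m Unit F)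
    (D : Matrix m m F) : (Uz z).1 * fromBlocks a y x D * (Uz z)⁻¹.1 =
      fromBlocks (a - z * x) ((a - z * x) * z + (y - z * D)) x (x * z + D) := by
  change fromBlocks 1 (-z) 0 1 * fromBlocks a y x D * fromBlocks 1 z 0 1 = _
  simp [fromBlocks_multiply, sub_eq_add_neg]

lemma schur_det (α : F) (hα : α ≠ 0) (y : Matrix Unit m F) (x : Matrix m Unit F)
    (D : Matrix m m F) : (fromBlocks (α • 1) y x D).det = α * (D - α⁻¹ • (x * y)).det := by
  have : fromBlocks (α • 1) y x D =
      fromBlocks 1 0 (α⁻¹ • x) 1 * fromBlocks (α • 1) y 0 (D - α⁻¹ • (x * y)) := by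
    simp [fromBlocks_multiply, smul_smul, hα]
  rw [this, det_mul, det_fromBlocks_zero₁₂, det_fromBlocks_zero₂₁]
  simp

lemma conj2 (A : Matrix (Unit ⊕ m) (Unit ⊕ m) F) (hA : ∀ a : F, A ≠ a • 1) (α : F) :
    ∃ (P : (Matrix (Unit ⊕ m) (Unit ⊕ m) F)ˣ) (y : Matrix Unit m F) (x : Matrix m Unit F)
      (D : Matrix m m F), P * A * P⁻¹.1 = fromBlocks (α • 1) y x D ∧ x ≠ 0 := by
  obtain ⟨P, a, y, x, D, h, hx⟩ := conj1 A hA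
  obtain ⟨j, hj⟩ : ∃ j, x j () ≠ 0 := by
    by_contra! h
    exact hx (by ext i j; exact h i)
  let z : Matrix Unit m F := Matrix.of fun _ i => if i = j then (a - α) * (x j ())⁻¹ else 0
  have hz : z * x = (a - α) • 1 := by
    ext i k
    simp [z, Matrix.mul_apply, hj]
  refine ⟨Uz z * P, α • z + (y - z * D), x, x * z + D, ?_, hx⟩
  · have : (Uz z * P : (Matrix (Unit ⊕ m) (Unit ⊕ m) F)ˣ).1 * A * (Uz z * P)⁻¹.1 =
      (Uz z).1 * (P.1 * A * P⁻¹.1) * (Uz z)⁻¹.1 := by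
      rw [_root_.mul_inv_rev, Units.val_mul, Units.val_mul]; simp only [mul_assoc]
    rw [this, h, conjU, hz, ← sub_smul, sub_sub_cancel]
    simp

lemma conj3 (A : Matrix (Unit ⊕ m) (Unit ⊕ m) F) (hA : ∀ a : F, A ≠ a • 1) (hdet : A.det ≠ 0)
    (α : F) (hα : α ≠ 0) :
    ∃ (P : (Matrix (Unit ⊕ m) (Unit ⊕ m) F)ˣ) (y : Matrix Unit m F) (x : Matrix m Unit F)
      (D : Matrix m m F), P * A * P⁻¹.1 = fromBlocks (α • 1) y x D ∧
      (Nontrivial m → ∀ a : F, D - α⁻¹ • (x * y) ≠ a • 1) := by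
  obtain ⟨P, y, x, D, h, hx⟩ := conj2 A hA α
  by_cases hs : Nontrivial m → ∀ a : F, D - α⁻¹ • (x * y) ≠ a • 1
  · exact ⟨P, y, x, D, h, hs⟩
  push Not at hs
  obtain ⟨hm, l, hl⟩ := hs
  obtain ⟨j, hj⟩ : ∃ j, x j () ≠ 0 := by
    by_contra! h
    exact hx (by ext i j; exact h i)
  obtain ⟨i, hi⟩ := exists_ne j
  let z : Matrix Unit m F := Matrix.of fun _ k =>
    (if k = i then x j () else 0) - (if k = j then x i () else 0)
  have hz : z * x = 0 := by
    ext k k'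
    simp [z, Matrix.mul_apply, sub_mul, Finset.sum_sub_distrib]
    ring
  have hzi : z () i ≠ 0 := by simpa [z, hi] using hj
  have hl0 : l ≠ 0 := by
    rintro rfl
    have h2 : (P.1 * A * P⁻¹.1).det = A.det := by
      rw [det_mul_right_comm]; simp
    rw [h, schur_det α hα, hl, zero_smul, @det_zero _ _ _ _ _ ⟨j⟩, mul_zero] at h2
    exact hdet h2.symm
  refine ⟨Uz z * P, α • z + (y - z * D), x, x * z + D, ?_, ?_⟩
  · have : (Uz z * P : (Matrix (Unit ⊕ m) (Unit ⊕ m) F)ˣ).1 * A * (Uz z * P)⁻¹.1 =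
      (Uz z).1 * (P.1 * A * P⁻¹.1) * (Uz z)⁻¹.1 := by
      rw [_root_.mul_inv_rev, Units.val_mul, Units.val_mul]; simp only [mul_assoc]
    rw [this, h, conjU, hz, sub_zero]
    simp
  · intro _ a ha
    have hD : D = l • 1 + α⁻¹ • (x * y) := by rw [← hl]; simp
    have hzD : z * D = l • z := by
      rw [hD, Matrix.mul_add, Matrix.mul_smul, Matrix.mul_smul, ← Matrix.mul_assoc, hz]; simp
    have h3 : x * z + D - α⁻¹ • (x * (α • z + (y - z * D))) = l • 1 + (α⁻¹ * l) • (x * z) := by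
      rw [hzD, Matrix.mul_add, Matrix.mul_sub, hD, smul_add, smul_sub, Matrix.mul_smul, Matrix.mul_smul,
        smul_smul, inv_mul_cancel₀ hα, smul_smul]
      simp
      abel
    rw [h3] at ha
    have h4 := congrFun (congrFun ha j) i
    have h5 := congrFun (congrFun (congrArg (fun M => z * M) ha) ()) i
    have h6 : z * (l • 1 + (α⁻¹ * l) • (x * z)) = l • z := by
      rw [Matrix.mul_add, Matrix.mul_smul, Matrix.mul_smul, ← Matrix.mul_assoc, hz]; simp
    simp [Matrix.mul_apply, hi.symm, hα, hl0, hj, hzi] at h4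

theorem sourour (n : ℕ) : ∀ (A : Matrix (Fin n) (Fin n) F) (β γ : Fin n → F),
    (∀ i, β i ≠ 0) → (∀ i, γ i ≠ 0) → (2 ≤ n → ∀ a : F, A ≠ a • 1) →
    A.det = (∏ i, β i) * ∏ i, γ i →
    ∃ B C : Matrix (Fin n) (Fin n) F, A = B * C ∧ B.charpoly = ∏ i, (X - Polynomial.C (β i)) ∧
      C.charpoly = ∏ i, (X - Polynomial.C (γ i)) := by
  induction n with
  | zero => intro A β γ _ _ _ _; exact ⟨A, A, by ext i; exact i.elim0, by simp, by simp⟩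
  | succ n ih =>
    intro A β γ hβ hγ hA hdet
    rcases Nat.eq_zero_or_pos n with rfl | hn
    · refine ⟨diagonal β, diagonal γ, ?_, charpoly_diagonal _, charpoly_diagonal _⟩
      ext i j
      fin_cases i; fin_cases j
      simpa using hdet
    · let e : Fin (n + 1) ≃ Unit ⊕ Fin n :=
        ((finSuccEquiv n).trans (Equiv.optionEquivSumPUnit _)).trans (Equiv.sumComm _ _)
      have hα : β 0 * γ 0 ≠ 0 := mul_ne_zero (hβ 0) (hγ 0)
      obtain ⟨P, y, x, D, h, hs⟩ := conj3 (A.submatrix e.symm e.symm) (by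
        intro a ha
        apply hA (by omega) a
        have := congrArg (fun M => M.submatrix e e) ha
        simpa [submatrix_smul] using this) (by
          rw [det_submatrix_equiv_self, hdet]
          exact mul_ne_zero (Finset.prod_ne_zero_iff.mpr fun i _ => hβ i)
            (Finset.prod_ne_zero_iff.mpr fun i _ => hγ i)) (β 0 * γ 0) hα
      have hd : (P.1 * A.submatrix e.symm e.symm * P⁻¹.1).det = A.det := by
        rw [det_mul_right_comm]; simp
      rw [h, schur_det _ hα, hdet, Fin.prod_univ_succ, Fin.prod_univ_succ] at hd
      obtain ⟨B, C, hBC, hB, hC⟩ := ih (D - (β 0 * γ 0)⁻¹ • (x * y)) (fun i => β i.succ) (fun i => γ i.succ)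
        (fun i => hβ _) (fun i => hγ _)
        (fun h2 => hs (Fin.nontrivial_iff_two_le.mpr h2))
        (by
          apply mul_left_cancel₀ hα
          rw [hd]; ring)
      let B0 : Matrix (Unit ⊕ Fin n) (Unit ⊕ Fin n) F := fromBlocks (β 0 • 1) 0 ((γ 0)⁻¹ • x) B
      let C0 : Matrix (Unit ⊕ Fin n) (Unit ⊕ Fin n) F := fromBlocks (γ 0 • 1) ((β 0)⁻¹ • y) 0 C
      have h0 : P.1 * A.submatrix e.symm e.symm * P⁻¹.1 = B0 * C0 := by
        rw [h]
        simp only [B0, C0, fromBlocks_multiply, ← hBC]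
        congr 1
        · simp [smul_smul, mul_comm]
        · simp [smul_smul, hβ 0]
        · simp [smul_smul, hγ 0]
        · simp [smul_smul, mul_comm]
      have h1 : A.submatrix e.symm e.symm = (P⁻¹.1 * B0 * P.1) * (P⁻¹.1 * C0 * P.1) := by
        calc _ = P⁻¹.1 * (P.1 * A.submatrix e.symm e.symm * P⁻¹.1) * P.1 := by
              simp [mul_assoc]
          _ = _ := by rw [h0]; simp [mul_assoc]
      have cu : ∀ a : F, ((a • 1 : Matrix Unit Unit F)).charpoly = X - Polynomial.C a := by
        intro a
        rw [smul_one_eq_diagonal, charpoly_diagonal]; simp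
      refine ⟨(P⁻¹.1 * B0 * P.1).submatrix e e, (P⁻¹.1 * C0 * P.1).submatrix e e, ?_, ?_, ?_⟩
      · rw [submatrix_mul_equiv, ← h1]; simp
      · have := charpoly_reindex e.symm (P⁻¹.1 * B0 * P.1)
        rw [reindex_apply, Equiv.symm_symm] at this
        rw [this, cp_conj, charpoly_fromBlocks_zero₁₂, hB, cu, Fin.prod_univ_succ]
      · have := charpoly_reindex e.symm (P⁻¹.1 * C0 * P.1)
        rw [reindex_apply, Equiv.symm_symm] at this
        rw [this, cp_conj, charpoly_fromBlocks_zero₂₁, hC, cu, Fin.prod_univ_succ]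

lemma similar_diag {n : ℕ} (M : Matrix (Fin n) (Fin n) F) (β : Fin n → F)
    (hβ : Function.Injective β) (h : M.charpoly = ∏ i, (X - Polynomial.C (β i))) :
    ∃ P : (Matrix (Fin n) (Fin n) F)ˣ, M = P.1 * diagonal β * P⁻¹.1 := by
  have h1 : ∀ i, ∃ v, Module.End.HasEigenvector (toLin' M) (β i) v := by
    intro i
    apply Module.End.HasEigenvalue.exists_hasEigenvector
    rw [Module.End.hasEigenvalue_iff_isRoot_charpoly, charpoly_toLin', h, IsRoot.def, eval_prod]
    exact Finset.prod_eq_zero (Finset.mem_univ i) (by simp)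
  choose v hv using h1
  have hli := Module.End.eigenvectors_linearIndependent' _ β hβ v hv
  have hu : IsUnit (Matrix.of v)ᵀ := by
    rw [isUnit_transpose]
    exact linearIndependent_rows_iff_isUnit.mp hli
  obtain ⟨P, hP⟩ := hu
  refine ⟨P, ?_⟩
  rw [Units.eq_mul_inv_iff_mul_eq, hP]
  ext i j
  have := congrFun (hv j).apply_eq_smul i
  simp [mulVec, dotProduct] at this
  simp [Matrix.mul_apply, this, mul_comm, diagonal_apply]

end sour
end PW

namespace PW
open Matrix

lemma lift_nat {d : ℕ} {G H : Type*} [Group G] [Group H] (f : G →* H) (g : Fin d → G)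
    (w : FreeGroup (Fin d)) : FreeGroup.lift (fun i => f (g i)) w = f (FreeGroup.lift g w) := by
  have : FreeGroup.lift (fun i => f (g i)) = f.comp (FreeGroup.lift g) := by
    apply FreeGroup.ext_hom
    intro i
    simp
  rw [this]; rfl

lemma sl2_split {K : Type*} [NontriviallyNormedField K] [CharZero K]
    (hK : ∀ t : K, 2 < ‖t‖ → ∃ r : K, r * r - t * r + 1 = 0)
    {d : ℕ} (w : FreeGroup (Fin d)) (hw : w ≠ 1) (S : Finset K) :
    ∃ (g : Fin d → SpecialLinearGroup (Fin 2) K) (r : K), r ≠ 0 ∧ r ∉ S ∧ r⁻¹ ∉ S ∧ r ≠ r⁻¹ ∧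
      (FreeGroup.lift g w).1.trace = r + r⁻¹ := by
  obtain ⟨g, hg⟩ := sl2_poly K w hw
  obtain ⟨c, hc⟩ := NormedField.exists_one_lt_norm K
  have h1 : Filter.Tendsto (fun n : ℕ => ‖c ^ n‖) Filter.atTop Filter.atTop := by
    simp_rw [norm_pow]
    exact tendsto_pow_atTop_atTop_of_one_lt hc
  have h2 := tendsto_norm_atTop _ hg h1
  obtain ⟨M, hM2, hM1, hMS⟩ : ∃ M : ℝ, 2 ≤ M ∧ ‖(1 : K) + 1‖ ≤ M ∧ ∀ s ∈ S, ‖s + s⁻¹‖ ≤ M := by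
    classical
    obtain ⟨M₀, hM₀⟩ := (S.image (fun s : K => ‖s + s⁻¹‖)).exists_le
    refine ⟨max 2 (max ‖(1 : K) + 1‖ M₀), le_max_left _ _,
      le_trans (le_max_left _ _) (le_max_right _ _), fun s hs => ?_⟩
    exact (hM₀ _ (Finset.mem_image_of_mem _ hs)).trans
      (le_trans (le_max_right _ _) (le_max_right _ _))
  obtain ⟨n, hn⟩ := (h2.eventually_gt_atTop M).exists
  set t := eval (c ^ n) (FreeGroup.lift g w).1.trace with ht
  obtain ⟨r, hr⟩ := hK t (lt_of_le_of_lt hM2 hn)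
  have hr0 : r ≠ 0 := by rintro rfl; simp at hr
  have htr : t = r + r⁻¹ := by
    field_simp
    linear_combination -hr
  have key : ∀ s ∈ S, t ≠ s + s⁻¹ := by
    intro s hs h
    rw [h] at hn
    exact absurd hn (not_lt.mpr (hMS s hs))
  refine ⟨fun i => SpecialLinearGroup.map (evalRingHom (c ^ n)) (g i), r, hr0, ?_, ?_, ?_, ?_⟩
  · intro h; exact key r h htr
  · intro h; exact key _ h (by rw [htr, inv_inv, add_comm])
  · intro h
    have h3 : r * r = 1 := by nth_rewrite 2 [h]; exact mul_inv_cancel₀ hr0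
    rcases mul_self_eq_one_iff.mp h3 with rfl | rfl
    · rw [htr] at hn
      rw [inv_one] at hn
      exact absurd hn (not_lt.mpr hM1)
    · rw [htr] at hn
      have : ((-1 : K) + (-1)⁻¹) = -(1 + 1) := by rw [inv_neg, inv_one]; ring
      rw [this, norm_neg] at hn
      exact absurd hn (not_lt.mpr hM1)
  · rw [lift_nat, ← htr, ht]
    simp [Matrix.trace, Fin.sum_univ_two]

lemma real_quad (t : ℝ) (ht : 2 < ‖t‖) : ∃ r : ℝ, r * r - t * r + 1 = 0 := by
  have h : 0 ≤ t ^ 2 - 4 := by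
    rw [Real.norm_eq_abs] at ht
    nlinarith [sq_abs t]
  refine ⟨(t + √(t ^ 2 - 4)) / 2, ?_⟩
  nlinarith [Real.sq_sqrt h]

lemma padic_quad (p : ℕ) [hp : Fact p.Prime] (t : ℚ_[p]) (ht : 2 < ‖t‖) :
    ∃ r : ℚ_[p], r * r - t * r + 1 = 0 := by
  have ht0 : t ≠ 0 := by rintro rfl; simp at ht; linarith
  have h1 : ‖t⁻¹ ^ 2‖ < 1 := by
    rw [norm_pow, norm_inv]
    apply pow_lt_one₀ (by positivity) _ (by norm_num)
    exact inv_lt_one_of_one_lt₀ (by linarith)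
  let a : ℤ_[p] := ⟨t⁻¹ ^ 2, h1.le⟩
  have hd : (X ^ 2 - X + Polynomial.C a : ℤ_[p][X]).derivative.aeval (1 : ℤ_[p]) = 1 := by
    norm_num
  have hv : (X ^ 2 - X + Polynomial.C a : ℤ_[p][X]).aeval (1 : ℤ_[p]) = a := by simp
  obtain ⟨z, hz, -⟩ := hensels_lemma (F := (X ^ 2 - X + Polynomial.C a : ℤ_[p][X])) (a := 1)
    (by rw [hd, hv]; simpa [a] using h1)
  simp at hz
  have hz' := congrArg (fun y : ℤ_[p] => (y : ℚ_[p])) hz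
  refine ⟨t * z, ?_⟩
  have h5 : t * t⁻¹ = 1 := mul_inv_cancel₀ ht0
  have h6 : (z : ℚ_[p]) ^ 2 - z + t⁻¹ ^ 2 = 0 := by
    rw [PadicInt.coe_add, PadicInt.coe_sub, PadicInt.coe_pow] at hz'
    exact hz'
  linear_combination t ^ 2 * h6 - (t * t⁻¹ + 1) * h5

section asm
variable {F : Type*} [Field F]

lemma sl2_F (hF : Nonempty (ℝ →+* F) ∨ ∃ (p : ℕ) (hp : Fact p.Prime), Nonempty (@Padic p hp →+* F))
    {d : ℕ} (w : FreeGroup (Fin d)) (hw : w ≠ 1) (S : Finset F) :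
    ∃ (g : Fin d → SpecialLinearGroup (Fin 2) F) (r : F), r ≠ 0 ∧ r ∉ S ∧ r⁻¹ ∉ S ∧ r ≠ r⁻¹ ∧
      (FreeGroup.lift g w).1.trace = r + r⁻¹ := by
  have aux : ∀ {K : Type} [NontriviallyNormedField K] [CharZero K]
    (_ : ∀ t : K, 2 < ‖t‖ → ∃ r : K, r * r - t * r + 1 = 0) (φ : K →+* F),
    ∃ (g : Fin d → SpecialLinearGroup (Fin 2) F) (r : F), r ≠ 0 ∧ r ∉ S ∧ r⁻¹ ∉ S ∧ r ≠ r⁻¹ ∧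
      (FreeGroup.lift g w).1.trace = r + r⁻¹ := by
    intro K _ _ hK φ
    classical
    obtain ⟨g, r, h0, h1, h2, h3, h4⟩ := sl2_split hK w hw (S.preimage φ φ.injective.injOn)
    rw [Finset.mem_preimage] at h1 h2
    refine ⟨fun i => SpecialLinearGroup.map φ (g i), φ r, ?_, h1, ?_, ?_, ?_⟩
    · simpa using h0
    · rwa [← map_inv₀]
    · rw [← map_inv₀]; exact fun h => h3 (φ.injective h)
    · rw [lift_nat, ← map_inv₀, ← map_add, ← h4]
      simp [Matrix.trace, Fin.sum_univ_two]
  rcases hF with ⟨⟨φ⟩⟩ | ⟨p, hp, ⟨φ⟩⟩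
  · exact aux real_quad φ
  · exact aux (padic_quad p) φ

def blk (n : ℕ) : SpecialLinearGroup (Fin 2) F × SpecialLinearGroup (Fin n) F →*
    SpecialLinearGroup (Fin (2 + n)) F where
  toFun q := ⟨reindex finSumFinEquiv finSumFinEquiv (fromBlocks q.1.1 0 0 q.2.1), by
    rw [det_reindex_self, det_fromBlocks_zero₂₁, q.1.2, q.2.2, mul_one]⟩
  map_one' := by
    apply Subtype.ext
    simp
  map_mul' a b := by
    apply Subtype.ext
    change reindex finSumFinEquiv finSumFinEquiv (fromBlocks (a.1.1 * b.1.1) 0 0 (a.2.1 * b.2.1)) =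
      reindex finSumFinEquiv finSumFinEquiv (fromBlocks a.1.1 0 0 a.2.1) *
      reindex finSumFinEquiv finSumFinEquiv (fromBlocks b.1.1 0 0 b.2.1)
    simp [fromBlocks_multiply]

lemma word_split (hF : Nonempty (ℝ →+* F) ∨ ∃ (p : ℕ) (hp : Fact p.Prime), Nonempty (@Padic p hp →+* F))
    {d : ℕ} (w : FreeGroup (Fin d)) (hw : w ≠ 1) (n : ℕ) : ∀ S : Finset F, 1 ∉ S →
    ∃ (g : Fin d → SpecialLinearGroup (Fin n) F) (T : Finset F), Disjoint T S ∧
      (FreeGroup.lift g w).1.charpoly = ∏ t ∈ T, (X - Polynomial.C t) := by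
  classical
  induction n using Nat.strong_induction_on with
  | _ n ih =>
  intro S hS
  match n, ih with
  | 0, _ => exact ⟨fun _ => 1, ∅, by simp, by simp⟩
  | 1, _ =>
    refine ⟨fun _ => 1, {1}, by simpa using hS, ?_⟩
    rw [Subsingleton.elim (FreeGroup.lift _ w) (1 : SpecialLinearGroup (Fin 1) F)]
    simp [charpoly_one]
  | n + 2, ih =>
    obtain ⟨g1, r, h0, h1, h2, h3, h4⟩ := sl2_F hF w hw (insert 1 S)
    simp only [Finset.mem_insert, not_or] at h1 h2
    obtain ⟨g2, T, hT, hc⟩ := ih n (by omega) (insert r (insert r⁻¹ S)) (by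
      simp only [Finset.mem_insert, not_or]
      exact ⟨fun h => h1.1 h.symm, fun h => h2.1 h.symm, hS⟩)
    simp only [Finset.disjoint_insert_right] at hT
    have hcomm : 2 + n = n + 2 := by omega
    rw [← hcomm]
    refine ⟨fun i => blk n (g1 i, g2 i), insert r (insert r⁻¹ T), ?_, ?_⟩
    · simp only [Finset.disjoint_insert_left]
      exact ⟨h1.2, h2.2, hT.2.2⟩
    · have e1 := lift_nat (MonoidHom.fst _ _) (fun i => (g1 i, g2 i)) w
      have e2 := lift_nat (MonoidHom.snd _ _) (fun i => (g1 i, g2 i)) w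
      simp only [MonoidHom.coe_fst, MonoidHom.coe_snd] at e1 e2
      rw [lift_nat]
      change (reindex finSumFinEquiv finSumFinEquiv (fromBlocks _ 0 0 _)).charpoly = _
      rw [charpoly_reindex, charpoly_fromBlocks_zero₁₂, ← e1, ← e2, hc,
        Finset.prod_insert (by simp only [Finset.mem_insert, not_or]; exact ⟨h3, hT.1⟩),
        Finset.prod_insert hT.2.1, ← mul_assoc]
      congr 1
      rw [charpoly_fin_two, h4, (FreeGroup.lift g1 w).2]
      have : (Polynomial.C r * Polynomial.C r⁻¹ : F[X]) = 1 := by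
        rw [← C_mul, mul_inv_cancel₀ h0, C_1]
      rw [C_add, C_1]
      linear_combination -this

lemma word_split' (hF : Nonempty (ℝ →+* F) ∨ ∃ (p : ℕ) (hp : Fact p.Prime), Nonempty (@Padic p hp →+* F))
    {d : ℕ} (w : FreeGroup (Fin d)) (hw : w ≠ 1) (n : ℕ) :
    ∃ (g : Fin d → SpecialLinearGroup (Fin n) F) (β : Fin n → F), Function.Injective β ∧
      (FreeGroup.lift g w).1.charpoly = ∏ i, (X - Polynomial.C (β i)) := by
  obtain ⟨g, T, -, h⟩ := word_split hF w hw n ∅ (by simp)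
  have hn : T.card = n := by
    have := congrArg natDegree h
    rw [charpoly_natDegree_eq_dim, natDegree_prod_of_monic _ _ (fun t _ => monic_X_sub_C t)] at this
    simpa using this.symm
  let e := (T.equivFinOfCardEq hn).symm
  refine ⟨g, fun i => (e i : F), fun i j hij => e.injective (Subtype.ext hij), ?_⟩
  rw [h, e.prod_comp (fun t : T => (X - Polynomial.C (t : F)))]
  exact (Finset.prod_coe_sort T (fun t => X - Polynomial.C t)).symm

def cj {n : ℕ} (Q : (Matrix (Fin n) (Fin n) F)ˣ) :
    SpecialLinearGroup (Fin n) F →* SpecialLinearGroup (Fin n) F where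
  toFun A := ⟨Q.1 * A.1 * Q⁻¹.1, by rw [det_mul_right_comm]; simp⟩
  map_one' := by apply Subtype.ext; simp
  map_mul' a b := by
    apply Subtype.ext
    change Q.1 * (a.1 * b.1) * Q⁻¹.1 = (Q.1 * a.1 * Q⁻¹.1) * (Q.1 * b.1 * Q⁻¹.1)
    simp [mul_assoc]

lemma word_hit {d n : ℕ} (w : FreeGroup (Fin d)) (g : Fin d → SpecialLinearGroup (Fin n) F)
    (β : Fin n → F) (hβ : Function.Injective β)
    (h : (FreeGroup.lift g w).1.charpoly = ∏ i, (X - Polynomial.C (β i)))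
    (B : Matrix (Fin n) (Fin n) F) (hB : B.charpoly = ∏ i, (X - Polynomial.C (β i))) :
    ∃ g' : Fin d → SpecialLinearGroup (Fin n) F, (FreeGroup.lift g' w).1 = B := by
  obtain ⟨P, hP⟩ := similar_diag _ β hβ h
  obtain ⟨Q, hQ⟩ := similar_diag _ β hβ hB
  refine ⟨fun i => cj (Q * P⁻¹) (g i), ?_⟩
  rw [lift_nat]
  change (Q * P⁻¹).1 * (FreeGroup.lift g w).1 * (Q * P⁻¹)⁻¹.1 = B
  rw [hP, hQ, _root_.mul_inv_rev, Units.val_mul, Units.val_mul]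
  simp [mul_assoc]

lemma prod_one {n : ℕ} (A : SpecialLinearGroup (Fin n) F) (β : Fin n → F)
    (hβ : Function.Injective β) (h : A.1.charpoly = ∏ i, (X - Polynomial.C (β i))) :
    ∏ i, β i = 1 := by
  obtain ⟨P, hP⟩ := similar_diag _ β hβ h
  have := A.2
  rw [hP, det_mul_right_comm] at this
  simpa using this

end asm
end PW

end PWsec

/-- If `F` admits a ring homomorphism from `ℝ` or from some `ℚ_p`, `n ≥ 2`, and `w₁, w₂` are
nontrivial words, then `PSL_n(F) = w₁(PSL_n(F)) · w₂(PSL_n(F))`. -/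
theorem psl_waring_two {F : Type*} [Field F]
    (hF : Nonempty (ℝ →+* F) ∨ ∃ (p : ℕ) (hp : Fact p.Prime), Nonempty (@Padic p hp →+* F))
    (n : ℕ) (hn : 2 ≤ n) {d₁ d₂ : ℕ} (w₁ : FreeGroup (Fin d₁)) (w₂ : FreeGroup (Fin d₂))
    (hw₁ : w₁ ≠ 1) (hw₂ : w₂ ≠ 1) :
    ∀ g : PSL n F,
      ∃ g₁ ∈ wordValues w₁ (PSL n F), ∃ g₂ ∈ wordValues w₂ (PSL n F), g = g₁ * g₂ := by
  intro g
  obtain ⟨A, rfl⟩ := QuotientGroup.mk'_surjective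
    (Subgroup.center (Matrix.SpecialLinearGroup (Fin n) F)) g
  by_cases hA : ∀ a : F, A.1 ≠ a • 1
  · obtain ⟨u₁, β, hβ, h₁⟩ := PW.word_split' hF w₁ hw₁ n
    obtain ⟨u₂, γ, hγ, h₂⟩ := PW.word_split' hF w₂ hw₂ n
    have pβ := PW.prod_one _ β hβ h₁
    have pγ := PW.prod_one _ γ hγ h₂
    obtain ⟨B, C, hBC, hB, hC⟩ := PW.sourour n A.1 β γ
      (fun i => (Finset.prod_ne_zero_iff.mp (pβ.trans_ne one_ne_zero)) i (Finset.mem_univ i))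
      (fun i => (Finset.prod_ne_zero_iff.mp (pγ.trans_ne one_ne_zero)) i (Finset.mem_univ i))
      (fun _ => hA) (by rw [A.2, pβ, pγ, one_mul])
    obtain ⟨v₁, hv₁⟩ := PW.word_hit w₁ u₁ β hβ h₁ B hB
    obtain ⟨v₂, hv₂⟩ := PW.word_hit w₂ u₂ γ hγ h₂ C hC
    refine ⟨_, ⟨fun i => QuotientGroup.mk' _ (v₁ i), rfl⟩, _,
      ⟨fun i => QuotientGroup.mk' _ (v₂ i), rfl⟩, ?_⟩
    simp only
    rw [PW.lift_nat, PW.lift_nat, ← map_mul]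
    congr 1
    apply Subtype.ext
    rw [hBC, ← hv₁, ← hv₂]
    rfl
  · push Not at hA
    obtain ⟨a, ha⟩ := hA
    have one_lift : ∀ {d : ℕ} (w : FreeGroup (Fin d)),
        FreeGroup.lift (fun _ => (1 : PSL n F)) w = 1 := fun w => by
      have := PW.lift_nat (1 : PSL n F →* PSL n F) (fun _ => 1) w
      simpa using this
    refine ⟨1, ⟨fun _ => 1, one_lift w₁⟩, 1, ⟨fun _ => 1, one_lift w₂⟩, ?_⟩
    rw [mul_one, QuotientGroup.mk'_apply, QuotientGroup.eq_one_iff, Subgroup.mem_center_iff]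
    intro B
    apply Subtype.ext
    change B.1 * A.1 = A.1 * B.1
    rw [ha]
    simp
end
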